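/- arXiv:1311.4676 — 7 statements merged into one kernel-verified Lean document; each statement's English description precedes it below -/
import Mathlib

section
/- Let K be a finite field of characteristic 2. Let p_1, …, p_m ∈ K[X] be pairwise distinct monic irreducible polynomials, n_1, …, n_m positive integers, and g ∈ K[X] a polynomial not divisible by any p_i. Put B := p_1^{n_1} ⋯ p_m^{n_m} and C := g·p_1 ⋯ p_m, and assume C is nonconstant and that 2·deg B − deg C is nonnegative or odd. Assume the polynomial Y² + Y − C(x)/B(x)² is irreducible over the rational function field K(x), let F := K(x)[Y]/(Y² + Y − C(x)/B(x)²), and let O_F be the integral closure of K[x] in F. Then the following are equivalent: (a) every element of O_F is a finite sum of units of O_F, but for every positive integer N there exists an element of O_F that is not a sum of at most N units of O_F (i.e., u(O_F) = ω); (b) deg B = 1 and either deg C ≤ 1, or deg C = 2 and the leading coefficient of C is of the form a² + a for some a ∈ K. -/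
/-- Unit sum number `ω` for a subring (given as the integral closure, a subalgebra):
every element is a (nonempty) finite sum of units of the subring, but for every
positive `N` some element is not a sum of at most `N` units. -/
def SubringUnitSumNumberOmega {R F : Type*} [CommRing R] [CommRing F] [Algebra R F]
    (O : Subalgebra R F) : Prop :=
  (∀ r ∈ O, ∃ (k : ℕ) (e : Fin k → F), 1 ≤ k ∧
      (∀ i, e i ∈ O ∧ ∃ e' ∈ O, e i * e' = 1) ∧ r = ∑ i, e i) ∧
  ∀ N : ℕ, 0 < N → ∃ r ∈ O,
    ¬ ∃ (k : ℕ) (e : Fin k → F), 1 ≤ k ∧ k ≤ N ∧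
        (∀ i, e i ∈ O ∧ ∃ e' ∈ O, e i * e' = 1) ∧ r = ∑ i, e i

/-!
Let `A = K[x] ⊕ K[x]ω` with `ω² = c + b ω`. If `u` and `v` are units of `A`, the `ω`-coordinates
of `v u` and `v ū` have sum `im v * tr u` and product `(im v)² N(u) - (im u)² N(v)`; so when
`tr u` is nonconstant and `deg (im u) ≤ deg (im v)`, one of `v u`, `v u⁻¹` has an `ω`-coordinate of
smaller degree than `v`. By descent, a nonconstant unit `u` with `deg (im u)` minimal generates all
units up to constants, and the sums of units form `K[tr u] ⊕ K[tr u] u`. This is all of `A`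
exactly when `im u` is a unit and `deg (tr u) = 1`, and since the powers of `u` are linearly
independent over `K`, the number of summands is then unbounded.

For a Hasse normal form, `A` is the integral closure of `K[x]`, with `ω = b y`, and `tr u = b im u`.
Such a unit thus forces `deg b = 1`, and comparing leading coefficients in `N(u) ∈ K` gives the
conditions on `c`. Conversely, those conditions say that `c = (α² + α) b² + k b` for constants
`α` and `k ≠ 0`, and then `ω + α b + k` has norm `k²`.
-/

section

open Polynomial

/-! ### Sums of units -/

section SumsOfUnits

/-- `r` is `k`-good: a sum of exactly `k` units, encoded as a family indexed by `Fin k`.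
For `k = 0` this says `r = 0`. -/
def IsKGood {R : Type*} [Semiring R] (k : ℕ) (r : R) : Prop :=
  ∃ e : Fin k → Rˣ, ∑ i, (e i : R) = r

/-- The unit sum number of `R` is `ω`: every element is a sum of units, but the number of
summands is unbounded. -/
def HasUnitSumNumberOmega (R : Type*) [Semiring R] : Prop :=
  (∀ r : R, ∃ k, IsKGood k r) ∧ ∀ N : ℕ, ∃ r : R, ∀ k ≤ N, ¬ IsKGood k r

theorem IsKGood.add {R : Type*} [Semiring R] {k l : ℕ} {r s : R} (hr : IsKGood k r)
    (hs : IsKGood l s) : IsKGood (k + l) (r + s) := by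
  obtain ⟨e, rfl⟩ := hr
  obtain ⟨f, rfl⟩ := hs
  exact ⟨Fin.append e f, by simp [Fin.sum_univ_add]⟩

theorem isKGood_two_zero (R : Type*) [Ring R] : IsKGood 2 (0 : R) :=
  ⟨![1, -1], by simp⟩

theorem exists_isKGood_iff_mem_closure {R : Type*} [Semiring R] {r : R} :
    (∃ k, IsKGood k r) ↔ r ∈ AddSubmonoid.closure {x : R | IsUnit x} := by
  refine ⟨?_, fun hr ↦ ?_⟩
  · rintro ⟨k, e, rfl⟩
    exact sum_mem fun i _ ↦ AddSubmonoid.subset_closure (e i).isUnit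
  · induction hr using AddSubmonoid.closure_induction with
    | mem x hx => exact ⟨1, fun _ ↦ hx.unit, by simp⟩
    | zero => exact ⟨0, Fin.elim0, by simp⟩
    | add x y _ _ hx hy =>
      obtain ⟨k, hk⟩ := hx
      obtain ⟨l, hl⟩ := hy
      exact ⟨k + l, hk.add hl⟩

theorem isKGood_iff_of_injective {R A F : Type*} [CommRing R] [CommRing A] [CommRing F]
    [Algebra R A] [Algebra R F] {φ : A →ₐ[R] F} (hφ : Function.Injective φ) {k : ℕ} {a : A} :
    IsKGood k a ↔ ∃ e : Fin k → F,
      (∀ i, e i ∈ φ.range ∧ ∃ e' ∈ φ.range, e i * e' = 1) ∧ φ a = ∑ i, e i := by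
  constructor
  · rintro ⟨e, rfl⟩
    exact ⟨fun i ↦ φ (e i), fun i ↦ ⟨⟨_, rfl⟩, φ ↑(e i)⁻¹, ⟨_, rfl⟩, by simp [← map_mul]⟩,
      map_sum ..⟩
  · rintro ⟨e, he, hsum⟩
    choose x hx using fun i ↦ (he i).1
    have hunit (i : Fin k) : IsUnit (x i) := by
      obtain ⟨-, _, ⟨y, rfl⟩, hy⟩ := he i
      refine IsUnit.of_mul_eq_one y (hφ ?_)
      rw [map_mul, map_one, ← hy, ← hx i]
      rfl
    refine ⟨fun i ↦ (hunit i).unit, hφ ?_⟩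
    rw [map_sum, hsum]
    exact Finset.sum_congr rfl fun i _ ↦ hx i

theorem subringUnitSumNumberOmega_range_iff {R A F : Type*} [CommRing R] [CommRing A]
    [CommRing F] [Algebra R A] [Algebra R F] {φ : A →ₐ[R] F} (hφ : Function.Injective φ) :
    SubringUnitSumNumberOmega φ.range ↔ HasUnitSumNumberOmega A := by
  have hgood {k : ℕ} {a : A} := isKGood_iff_of_injective hφ (k := k) (a := a)
  constructor
  · rintro ⟨hsum, hunb⟩
    refine ⟨fun a ↦ ?_, fun N ↦ ?_⟩
    · obtain ⟨k, e, -, he⟩ := hsum (φ a) ⟨a, rfl⟩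
      exact ⟨k, hgood.2 ⟨e, he⟩⟩
    · obtain ⟨_, ⟨a, rfl⟩, ha⟩ := hunb (N + 2) (by omega)
      -- Adding `0 = 1 + (-1)` avoids the empty sum.
      refine ⟨a, fun k hk hka ↦ ha ⟨k + 2, ?_⟩⟩
      obtain ⟨e, he⟩ := hgood.1 (by simpa using hka.add (isKGood_two_zero A))
      exact ⟨e, by omega, by omega, he⟩
  · rintro ⟨hsum, hunb⟩
    refine ⟨?_, fun N _ ↦ ?_⟩
    · rintro _ ⟨a, rfl⟩
      obtain ⟨k, hk⟩ := hsum a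
      obtain ⟨e, he⟩ := hgood.1 (by simpa using hk.add (isKGood_two_zero A))
      exact ⟨k + 2, e, by omega, he⟩
    · obtain ⟨a, ha⟩ := hunb N
      refine ⟨φ a, ⟨a, rfl⟩, ?_⟩
      rintro ⟨k, e, -, hkN, he⟩
      exact ha k hkN (hgood.2 ⟨e, he⟩)

theorem adjoin_le_closure_isUnit {K A : Type*} [Field K] [CommRing A] [Algebra K A] {s : Set A}
    (hs : ∀ x ∈ s, IsUnit x) {x : A} (hx : x ∈ Algebra.adjoin K s) :
    x ∈ AddSubmonoid.closure {x : A | IsUnit x} := by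
  induction hx using Algebra.adjoin_induction with
  | mem x hx => exact AddSubmonoid.subset_closure (hs x hx)
  | algebraMap k =>
    obtain rfl | hk := eq_or_ne k 0
    · simp
    · exact AddSubmonoid.subset_closure (hk.isUnit.map (algebraMap K A))
  | add x y _ _ hx hy => exact add_mem hx hy
  | mul x y _ _ hx hy => exact (IsUnit.submonoid A).subsemiringClosure.mul_mem hx hy

theorem linearIndependent_zpow_of_transcendental {R A : Type*} [CommRing R] [CommRing A]
    [Algebra R A] {u : Aˣ} (hu : Transcendental R (u : A)) :
    LinearIndependent R fun n : ℤ ↦ ((u ^ n : Aˣ) : A) := by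
  rw [linearIndependent_iff]
  intro l hl
  have heval (f : ℤ →₀ R) : LaurentPolynomial.eval₂ (algebraMap R A) u (.ofCoeff f) =
      Finsupp.linearCombination R (fun n : ℤ ↦ ((u ^ n : Aˣ) : A)) f := by
    induction f using Finsupp.induction_linear with
    | zero => simp
    | add f g hf hg => rw [AddMonoidAlgebra.ofCoeff_add, map_add, map_add, hf, hg]
    | single n r =>
      rw [AddMonoidAlgebra.ofCoeff_single, LaurentPolynomial.single_eq_C_mul_T,
        LaurentPolynomial.eval₂_C_mul_T, Finsupp.linearCombination_single, Algebra.smul_def]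
  obtain ⟨n, p, hp⟩ := LaurentPolynomial.exists_T_pow (.ofCoeff l : LaurentPolynomial R)
  have hpu : aeval (u : A) p = 0 := by
    rw [aeval_def, ← LaurentPolynomial.eval₂_toLaurent, hp, map_mul, heval, hl, zero_mul]
  rw [transcendental_iff.1 hu p hpu, map_zero] at hp
  exact AddMonoidAlgebra.ofCoeff_eq_zero.1
    ((LaurentPolynomial.isUnit_T n).mul_left_eq_zero.1 hp.symm)

theorem card_le_of_sum_eq_sum_smul {R M ι κ : Type*} [Semiring R] [Nontrivial R] [AddCommMonoid M]
    [Module R M] [Fintype κ] {v : ι → M} (hv : LinearIndependent R v) {s : Finset ι} {c : κ → R}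
    {f : κ → ι} (h : ∑ i ∈ s, v i = ∑ j, c j • v (f j)) : s.card ≤ Fintype.card κ := by
  classical
  have hcoeff : ∑ i ∈ s, Finsupp.single i (1 : R) = ∑ j, Finsupp.single (f j) (c j) := by
    apply hv
    simpa using h
  have hsub : s ⊆ Finset.univ.image f := by
    intro i hi
    by_contra hif
    have hne (j : κ) : f j ≠ i := fun hj ↦ hif (Finset.mem_image.2 ⟨j, Finset.mem_univ j, hj⟩)
    have := DFunLike.congr_fun hcoeff i
    simp [Finsupp.finsetSum_apply, Finsupp.single_apply, hi, hne] at this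
  exact (Finset.card_le_card hsub).trans Finset.card_image_le

theorem exists_forall_not_isKGood {R A : Type*} [CommRing R] [Nontrivial R] [CommRing A]
    [Algebra R A] {u : Aˣ} (hu : Transcendental R (u : A))
    (hunits : ∀ v : Aˣ, ∃ (c : R) (n : ℤ), (v : A) = c • ((u ^ n : Aˣ) : A)) (N : ℕ) :
    ∃ r : A, ∀ k ≤ N, ¬ IsKGood k r := by
  obtain ⟨s, hs⟩ := Infinite.exists_subset_card_eq ℤ (N + 1)
  refine ⟨∑ n ∈ s, ((u ^ n : Aˣ) : A), ?_⟩
  rintro k hk ⟨e, he⟩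
  choose c n hcn using fun i ↦ hunits (e i)
  have hsum : ∑ n ∈ s, ((u ^ n : Aˣ) : A) = ∑ i, c i • ((u ^ n i : Aˣ) : A) := by
    rw [← he]
    exact Finset.sum_congr rfl fun i _ ↦ hcn i
  have hcard := card_le_of_sum_eq_sum_smul (linearIndependent_zpow_of_transcendental hu) hsum
  rw [Fintype.card_fin] at hcard
  omega

end SumsOfUnits

/-! ### Units of quadratic algebras over `K[X]` -/

section QuadraticUnits

theorem im_mul_mul_im_mul_star {R : Type*} [CommRing R] {a b : R} (u v : QuadraticAlgebra R a b) :
    (v * u).im * (v * star u).im = v.im ^ 2 * u.norm - u.im ^ 2 * v.norm := by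
  simp only [QuadraticAlgebra.im_mul, QuadraticAlgebra.re_star, QuadraticAlgebra.im_star,
    QuadraticAlgebra.norm_def]
  ring

theorem im_mul_add_im_mul_star {R : Type*} [CommRing R] {a b : R} (u v : QuadraticAlgebra R a b) :
    (v * u).im + (v * star u).im = v.im * u.trace := by
  rw [← QuadraticAlgebra.im_add, ← mul_add, ← QuadraticAlgebra.algebraMap_trace_eq_add_star]
  simp

variable {K : Type*} [Field K] {c b : K[X]}

local notation "A" => QuadraticAlgebra K[X] c b

theorem degree_lt_or_degree_lt_of_add_eq_mul {p q w t : K[X]} (hw : w ≠ 0) (ht : 0 < t.degree)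
    (hadd : p + q = w * t) (hmul : (p * q).degree ≤ (w * w).degree) :
    p.degree < w.degree ∨ q.degree < w.degree := by
  by_contra! ⟨hp, hq⟩
  have hp0 : p ≠ 0 := fun h ↦ hw (by simpa [h] using hp)
  have hq0 : q ≠ 0 := fun h ↦ hw (by simpa [h] using hq)
  have hadd' := congrArg natDegree hadd
  rw [natDegree_mul hw (ne_zero_of_degree_gt ht)] at hadd'
  have := natDegree_add_le p q
  rw [← natDegree_pos_iff_degree_pos] at ht
  have := natDegree_le_natDegree hp
  have := natDegree_le_natDegree hq
  have := natDegree_le_natDegree hmul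
  rw [natDegree_mul hp0 hq0, natDegree_mul hw hw] at this
  omega

theorem exists_ne_zero_norm_eq_C (u : Aˣ) : ∃ k : K, k ≠ 0 ∧ (u : A).norm = C k := by
  obtain ⟨k, hk, hku⟩ := isUnit_iff.1 (QuadraticAlgebra.isUnit_iff_norm_isUnit.1 u.isUnit)
  exact ⟨k, hk.ne_zero, hku.symm⟩

theorem exists_eq_algebraMap_of_im_eq_zero {u : Aˣ} (hu : (u : A).im = 0) :
    ∃ k : K, (u : A) = algebraMap K A k := by
  have hre : IsUnit (u : A).re := by
    have hnorm := QuadraticAlgebra.isUnit_iff_norm_isUnit.1 u.isUnit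
    rw [QuadraticAlgebra.norm_def, hu, mul_zero, mul_zero, add_zero, sub_zero] at hnorm
    exact isUnit_of_mul_isUnit_left hnorm
  obtain ⟨k, -, hk⟩ := isUnit_iff.1 hre
  refine ⟨k, ?_⟩
  rw [IsScalarTower.algebraMap_apply K K[X] A]
  ext1 <;> simp [hk, hu]

theorem exists_ne_zero_star_eq_smul_inv (u : Aˣ) :
    ∃ k : K, k ≠ 0 ∧ star (u : A) = k • ((u⁻¹ : Aˣ) : A) := by
  obtain ⟨k, hk, hku⟩ := exists_ne_zero_norm_eq_C u
  refine ⟨k, hk, u.isUnit.mul_left_cancel ?_⟩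
  rw [← QuadraticAlgebra.algebraMap_norm_eq_mul_star, hku, mul_smul_comm, u.mul_inv,
    ← Algebra.algebraMap_eq_smul_one, ← algebraMap_eq,
    ← IsScalarTower.algebraMap_apply K K[X] A]

theorem degree_im_mul_lt_or_degree_im_mul_inv_lt {u v : Aˣ} (hu : 0 < (u : A).trace.degree)
    (hv : (v : A).im ≠ 0) (huv : (u : A).im.degree ≤ (v : A).im.degree) :
    ((v : A) * u).im.degree < (v : A).im.degree ∨
      ((v : A) * ((u⁻¹ : Aˣ) : A)).im.degree < (v : A).im.degree := by
  obtain ⟨k, hk, hku⟩ := exists_ne_zero_star_eq_smul_inv u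
  have hstar : ((v : A) * star (u : A)).im.degree = ((v : A) * ((u⁻¹ : Aˣ) : A)).im.degree := by
    rw [hku, mul_smul_comm, QuadraticAlgebra.im_smul, smul_eq_C_mul,
      degree_C_mul hk]
  rw [← hstar]
  refine degree_lt_or_degree_lt_of_add_eq_mul hv hu (im_mul_add_im_mul_star _ _) ?_
  obtain ⟨l, hl, hlu⟩ := exists_ne_zero_norm_eq_C u
  obtain ⟨m, hm, hmv⟩ := exists_ne_zero_norm_eq_C v
  rw [im_mul_mul_im_mul_star, hlu, hmv]
  refine (degree_sub_le _ _).trans (max_le ?_ ?_)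
  · rw [degree_mul_C hl, sq]
  · rw [degree_mul_C hm, sq, degree_mul, degree_mul]
    exact add_le_add huv huv

theorem exists_eq_smul_zpow {u : Aˣ} (hu : 0 < (u : A).trace.degree)
    (hmin : ∀ v : Aˣ, (v : A).im ≠ 0 → (u : A).im.degree ≤ (v : A).im.degree) (v : Aˣ) :
    ∃ (k : K) (n : ℤ), (v : A) = k • ((u ^ n : Aˣ) : A) := by
  induction hd : (v : A).im.degree using WellFoundedLT.induction generalizing v with
  | ind d ih =>
  subst hd
  by_cases hv : (v : A).im = 0
  · obtain ⟨k, hk⟩ := exists_eq_algebraMap_of_im_eq_zero hv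
    exact ⟨k, 0, by rw [hk, zpow_zero, Units.val_one, Algebra.algebraMap_eq_smul_one]⟩
  obtain h | h := degree_im_mul_lt_or_degree_im_mul_inv_lt hu hv (hmin v hv)
  · obtain ⟨k, n, hn⟩ := ih _ h (v * u) rfl
    refine ⟨k, n - 1, ?_⟩
    rw [zpow_sub_one, Units.val_mul, ← smul_mul_assoc, ← hn, Units.val_mul,
      Units.mul_inv_cancel_right]
  · obtain ⟨k, n, hn⟩ := ih _ h (v * u⁻¹) rfl
    refine ⟨k, n + 1, ?_⟩
    rw [zpow_add_one, Units.val_mul, ← smul_mul_assoc, ← hn, Units.val_mul,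
      Units.inv_mul_cancel_right]

theorem exists_eq_comp_trace_of_mem_adjoin {u : A} {k : K} (hu : u.norm = C k) {z : A}
    (hz : z ∈ Algebra.adjoin K {u, star u}) :
    ∃ p q : K[X], z = algebraMap K[X] A (p.comp u.trace) + q.comp u.trace • u := by
  induction hz using Algebra.adjoin_induction with
  | mem z hz =>
    obtain rfl | rfl := hz
    · exact ⟨0, 1, by simp⟩
    · exact ⟨X, -1, by simp [QuadraticAlgebra.star_eq, sub_eq_add_neg]⟩
  | algebraMap r =>
    exact ⟨C r, 0, by simp [IsScalarTower.algebraMap_apply K K[X] A]⟩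
  | add z w _ _ hz hw =>
    obtain ⟨p, q, rfl⟩ := hz
    obtain ⟨p', q', rfl⟩ := hw
    exact ⟨p + p', q + q', by simp only [add_comp, map_add, add_smul]; ring⟩
  | mul z w _ _ hz hw =>
    obtain ⟨p, q, rfl⟩ := hz
    obtain ⟨p', q', rfl⟩ := hw
    refine ⟨p * p' - C k * (q * q'), p * q' + q * p' + X * (q * q'), ?_⟩
    have hsq := u.sq_eq_trace_smul_sub_norm
    simp only [hu, Algebra.smul_def, sub_comp, add_comp, mul_comp, C_comp, X_comp, map_sub, map_add,
      map_mul] at hsq ⊢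
    linear_combination (algebraMap K[X] A (q.comp u.trace) * algebraMap K[X] A (q'.comp u.trace)) *
      hsq

theorem isUnit_im_and_natDegree_trace_eq_one_of_adjoin_eq_top {u : A} {k : K} (hu : u.norm = C k)
    (htop : Algebra.adjoin K {u, star u} = ⊤) : IsUnit u.im ∧ u.trace.natDegree = 1 := by
  have hmem (z : A) := exists_eq_comp_trace_of_mem_adjoin hu (htop ▸ Algebra.mem_top : z ∈ _)
  obtain ⟨p, q, hω⟩ := hmem QuadraticAlgebra.omega
  have him : 1 = q.comp u.trace * u.im := by simpa using congrArg QuadraticAlgebra.im hω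
  obtain ⟨r, s, hX⟩ := hmem (algebraMap K[X] A X)
  have hs : s.comp u.trace = 0 := by
    have : s.comp u.trace * u.im = 0 := by simpa using (congrArg QuadraticAlgebra.im hX).symm
    exact (mul_eq_zero.1 this).resolve_right (IsUnit.of_mul_eq_one_right _ him.symm).ne_zero
  have hr : X = r.comp u.trace := by simpa [hs] using congrArg QuadraticAlgebra.re hX
  refine ⟨IsUnit.of_mul_eq_one_right _ him.symm, ?_⟩
  have hdeg : r.natDegree * u.trace.natDegree = 1 := by rw [← natDegree_comp, ← hr, natDegree_X]
  exact Nat.eq_one_of_mul_eq_one_left hdeg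

theorem adjoin_eq_top_of_isUnit_im {u : A} (him : IsUnit u.im) (htr : u.trace.natDegree = 1) :
    Algebra.adjoin K {u, star u} = ⊤ := by
  set S := Algebra.adjoin K {u, star u}
  have hu : u ∈ S := Algebra.subset_adjoin (by simp)
  have hX : algebraMap K[X] A X ∈ S := by
    obtain ⟨l, hl, m, hlm⟩ := natDegree_eq_one.1 htr
    have ht : algebraMap K[X] A u.trace ∈ S := by
      rw [QuadraticAlgebra.algebraMap_trace_eq_add_star]
      exact add_mem hu (Algebra.subset_adjoin (by simp))
    have : algebraMap K[X] A X = l⁻¹ • (algebraMap K[X] A u.trace - algebraMap K A m) := by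
      rw [eq_inv_smul_iff₀ hl, ← hlm]
      simp [IsScalarTower.algebraMap_apply K K[X] A, Algebra.smul_def]
    rw [this]
    exact S.smul_mem (sub_mem ht (S.algebraMap_mem m)) _
  have hpoly (p : K[X]) : algebraMap K[X] A p ∈ S := by
    have hle : Algebra.adjoin K {(X : K[X])} ≤ S.comap (IsScalarTower.toAlgHom K K[X] A) :=
      Algebra.adjoin_le (by simpa using hX)
    exact hle (by rw [adjoin_X]; exact Algebra.mem_top)
  rw [eq_top_iff]
  rintro z -
  obtain ⟨j, hj⟩ := him.exists_left_inv
  have : z = algebraMap K[X] A z.re +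
      algebraMap K[X] A (z.im * j) * (u - algebraMap K[X] A u.re) := by
    ext <;> simp [mul_assoc, hj]
  rw [this]
  exact add_mem (hpoly _) (mul_mem (hpoly _) (sub_mem hu (hpoly _)))

theorem transcendental_of_degree_trace_pos {u : A} (hu : 0 < u.trace.degree) :
    Transcendental K u := by
  intro halg
  have hstar : IsIntegral K (star u) := by
    refine halg.isIntegral.map_of_comp_eq (RingHom.id K) (starRingEnd A) (RingHom.ext fun k ↦ ?_)
    ext1 <;> simp [IsScalarTower.algebraMap_apply K K[X] A, starRingEnd_apply]
  have htr : IsIntegral K (algebraMap K[X] A u.trace) := by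
    rw [QuadraticAlgebra.algebraMap_trace_eq_add_star]
    exact halg.isIntegral.add hstar
  have hint : IsIntegral K u.trace :=
    (isIntegral_algebraMap_iff QuadraticAlgebra.algebraMap_injective).1 htr
  have hne : u.trace.leadingCoeff ≠ 0 := leadingCoeff_ne_zero.2 (ne_zero_of_degree_gt hu)
  exact transcendental u.trace (natDegree_pos_iff_degree_pos.2 hu).ne'
    (mem_nonZeroDivisors_of_ne_zero hne) hint.isAlgebraic

theorem exists_unit_minimalFor_degree_im
    (hgen : AddSubmonoid.closure {x : A | IsUnit x} = ⊤) :
    ∃ u : Aˣ, MinimalFor (fun v : Aˣ ↦ (v : A).im ≠ 0) (fun v ↦ (v : A).im.degree) u := by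
  refine exists_minimalFor_of_wellFoundedLT _ _ ?_
  by_contra! him
  have hle : AddSubmonoid.closure {x : A | IsUnit x} ≤
      (LinearMap.ker (QuadraticAlgebra.imₗ c b)).toAddSubmonoid :=
    AddSubmonoid.closure_le.2 fun x hx ↦ him hx.unit
  have : (QuadraticAlgebra.omega : A) ∈ LinearMap.ker (QuadraticAlgebra.imₗ c b) :=
    hle (hgen ▸ AddSubmonoid.mem_top _)
  simp at this

theorem mem_adjoin_of_mem_closure_isUnit {u : Aˣ}
    (hpow : ∀ v : Aˣ, ∃ (k : K) (n : ℤ), (v : A) = k • ((u ^ n : Aˣ) : A)) {x : A}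
    (hx : x ∈ AddSubmonoid.closure {x : A | IsUnit x}) :
    x ∈ Algebra.adjoin K {(u : A), star (u : A)} := by
  have hu : (u : A) ∈ Algebra.adjoin K {(u : A), star (u : A)} := Algebra.subset_adjoin (by simp)
  have huinv : ((u⁻¹ : Aˣ) : A) ∈ Algebra.adjoin K {(u : A), star (u : A)} := by
    obtain ⟨k, hk, hstar⟩ := exists_ne_zero_star_eq_smul_inv u
    rw [← inv_smul_eq_iff₀ hk] at hstar
    exact hstar ▸ Subalgebra.smul_mem _ (Algebra.subset_adjoin (by simp)) _
  induction hx using AddSubmonoid.closure_induction with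
  | mem x hx =>
    obtain ⟨k, n, hv⟩ := hpow hx.unit
    rw [← hx.unit_spec, hv]
    refine Subalgebra.smul_mem _ ?_ k
    obtain ⟨n, rfl | rfl⟩ := n.eq_nat_or_neg
    · simpa using pow_mem hu n
    · simpa using pow_mem huinv n
  | zero => exact zero_mem _
  | add x y _ _ hx hy => exact add_mem hx hy

theorem exists_isUnit_im_of_closure_isUnit_eq_top
    (htr : ∀ u : Aˣ, (u : A).im ≠ 0 → 0 < (u : A).trace.degree)
    (hgen : AddSubmonoid.closure {x : A | IsUnit x} = ⊤) :
    ∃ u : Aˣ, IsUnit (u : A).im ∧ (u : A).trace.natDegree = 1 := by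
  obtain ⟨u, hu, hmin⟩ := exists_unit_minimalFor_degree_im hgen
  have hpow := exists_eq_smul_zpow (htr u hu) fun v hv ↦ (le_total _ _).elim id (hmin hv)
  obtain ⟨k, -, hk⟩ := exists_ne_zero_norm_eq_C u
  refine ⟨u, isUnit_im_and_natDegree_trace_eq_one_of_adjoin_eq_top hk ?_⟩
  exact eq_top_iff.2 fun x _ ↦ mem_adjoin_of_mem_closure_isUnit hpow (hgen ▸ AddSubmonoid.mem_top x)

theorem hasUnitSumNumberOmega_of_isUnit_im {u : Aˣ} (him : IsUnit (u : A).im)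
    (htr : (u : A).trace.natDegree = 1) : HasUnitSumNumberOmega A := by
  have hpos : 0 < (u : A).trace.degree := natDegree_pos_iff_degree_pos.1 (by omega)
  have hmin (v : Aˣ) (hv : (v : A).im ≠ 0) : (u : A).im.degree ≤ (v : A).im.degree := by
    rw [degree_eq_zero_of_isUnit him]
    exact zero_le_degree_iff.2 hv
  refine ⟨fun x ↦ exists_isKGood_iff_mem_closure.2 ?_, exists_forall_not_isKGood
    (transcendental_of_degree_trace_pos hpos) (exists_eq_smul_zpow hpos hmin)⟩
  refine adjoin_le_closure_isUnit (K := K) (s := {(u : A), star (u : A)}) ?_ ?_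
  · rintro _ (rfl | rfl)
    exacts [u.isUnit, u.isUnit.star]
  · rw [adjoin_eq_top_of_isUnit_im him htr]
    exact Algebra.mem_top

theorem hasUnitSumNumberOmega_iff_exists_isUnit_im
    (htr : ∀ u : Aˣ, (u : A).im ≠ 0 → 0 < (u : A).trace.degree) :
    HasUnitSumNumberOmega A ↔ ∃ u : Aˣ, IsUnit (u : A).im ∧ (u : A).trace.natDegree = 1 := by
  refine ⟨fun h ↦ exists_isUnit_im_of_closure_isUnit_eq_top htr ?_, ?_⟩
  · exact eq_top_iff.2 fun x _ ↦ exists_isKGood_iff_mem_closure.1 (h.1 x)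
  · rintro ⟨u, him, hu⟩
    exact hasUnitSumNumberOmega_of_isUnit_im him hu

end QuadraticUnits

/-! ### Units at infinity -/

section UnitsAtInfinity

variable {K : Type*} [Field K] {c b : K[X]} {u : (QuadraticAlgebra K[X] c b)ˣ}

theorem natDegree_add_natDegree_add_lt {p q : K[X]} (h : p.natDegree ≠ (p + q).natDegree) :
    p.natDegree + (p + q).natDegree < 2 * q.natDegree := by
  have hadd := natDegree_add_le p q
  have hsub := natDegree_sub_le (p + q) q
  rw [add_sub_cancel_right] at hsub
  omega

theorem re_mul_re_add_eq {R : Type*} [CommRing R] {a b : R} (z : QuadraticAlgebra R a b) :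
    z.re * (z.re + b * z.im) = a * z.im ^ 2 + z.norm := by
  rw [QuadraticAlgebra.norm_def]
  ring

theorem natDegree_re_mul_re_add (hc : 0 < c.natDegree) (him : u.val.im ≠ 0) :
    (u.val.re * (u.val.re + b * u.val.im)).natDegree = c.natDegree + 2 * u.val.im.natDegree := by
  obtain ⟨k, -, hk⟩ := exists_ne_zero_norm_eq_C u
  rw [re_mul_re_add_eq, hk, natDegree_add_C,
    natDegree_mul (ne_zero_of_natDegree_gt hc) (pow_ne_zero 2 him), natDegree_pow]

theorem leadingCoeff_re_mul_leadingCoeff_re_add (hc : 0 < c.natDegree) (him : u.val.im ≠ 0) :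
    u.val.re.leadingCoeff * (u.val.re + b * u.val.im).leadingCoeff =
      c.leadingCoeff * u.val.im.leadingCoeff ^ 2 := by
  obtain ⟨k, -, hk⟩ := exists_ne_zero_norm_eq_C u
  have hdeg : (C k).degree < (c * u.val.im ^ 2).degree := by
    refine degree_C_le.trans_lt (natDegree_pos_iff_degree_pos.1 ?_)
    rw [natDegree_mul (ne_zero_of_natDegree_gt hc) (pow_ne_zero 2 him)]
    omega
  rw [← leadingCoeff_mul, re_mul_re_add_eq, hk, leadingCoeff_add_of_degree_lt' hdeg,
    leadingCoeff_mul, leadingCoeff_pow]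

theorem natDegree_re_add_natDegree_re_add (hc : 0 < c.natDegree) (him : u.val.im ≠ 0) :
    u.val.re.natDegree + (u.val.re + b * u.val.im).natDegree =
      c.natDegree + 2 * u.val.im.natDegree := by
  have hdeg := natDegree_re_mul_re_add hc him (b := b)
  have hne : u.val.re * (u.val.re + b * u.val.im) ≠ 0 :=
    ne_zero_of_natDegree_gt (n := 0) (by omega)
  rw [← hdeg, natDegree_mul (left_ne_zero_of_mul hne) (right_ne_zero_of_mul hne)]

theorem natDegree_le_two_mul_natDegree_or_even (hc : 0 < c.natDegree) (him : u.val.im ≠ 0) :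
    c.natDegree ≤ 2 * b.natDegree ∨ Even c.natDegree := by
  have hdeg := natDegree_re_add_natDegree_re_add hc him (b := b)
  by_cases h : u.val.re.natDegree = (u.val.re + b * u.val.im).natDegree
  · exact .inr ⟨u.val.re.natDegree - u.val.im.natDegree, by omega⟩
  · left
    have := natDegree_add_natDegree_add_lt h
    have := natDegree_mul_le (p := b) (q := u.val.im)
    omega

theorem exists_leadingCoeff_eq_of_natDegree_eq (hb : b.Monic) (hc : 0 < c.natDegree)
    (hcb : c.natDegree = 2 * b.natDegree) (him : u.val.im ≠ 0) :
    ∃ α : K, c.leadingCoeff = α ^ 2 + α := by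
  have hdeg := natDegree_re_add_natDegree_re_add hc him (b := b)
  have hmul : (b * u.val.im).natDegree = b.natDegree + u.val.im.natDegree := hb.natDegree_mul' him
  have heq : u.val.re.natDegree = (u.val.re + b * u.val.im).natDegree := by
    by_contra h
    have := natDegree_add_natDegree_add_lt h
    omega
  have hlc : (u.val.re + b * u.val.im).leadingCoeff =
      u.val.re.leadingCoeff + u.val.im.leadingCoeff := by
    have : u.val.re.natDegree = (b * u.val.im).natDegree := by omega
    rw [leadingCoeff, ← heq, coeff_add, coeff_natDegree, this, coeff_natDegree,
      leadingCoeff_mul, hb.leadingCoeff, one_mul]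
  have hprod := leadingCoeff_re_mul_leadingCoeff_re_add hc him (b := b)
  rw [hlc] at hprod
  have hne : u.val.im.leadingCoeff ≠ 0 := leadingCoeff_ne_zero.2 him
  refine ⟨u.val.re.leadingCoeff / u.val.im.leadingCoeff, ?_⟩
  field_simp
  linear_combination -hprod

end UnitsAtInfinity

/-! ### The integral closure -/

section IntegralClosure

open scoped QuadraticAlgebra

section Divisibility

variable {R : Type*} [CommRing R] [IsDomain R] {b c : R}

theorem algebraMap_dvd_of_sq_dvd_norm_of_prime {p : R} (hp : Prime p) (hpb : p ∣ b) (hpc : p ∣ c)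
    (hpc2 : ¬ p ^ 2 ∣ c) {z : QuadraticAlgebra R c b} (hz : p ^ 2 ∣ z.norm) :
    algebraMap R _ p ∣ z := by
  rw [QuadraticAlgebra.algebraMap_dvd_iff]
  obtain ⟨b, rfl⟩ := hpb
  obtain ⟨c, rfl⟩ := hpc
  obtain ⟨n, hn⟩ := hz
  rw [QuadraticAlgebra.norm_def] at hn
  have hre : p ∣ z.re := by
    refine hp.dvd_of_dvd_pow (n := 2) ⟨p * n - b * z.re * z.im + c * z.im * z.im, ?_⟩
    linear_combination hn
  refine ⟨hre, ?_⟩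
  obtain ⟨r, hr⟩ := hre
  have hc : ¬ p ∣ c := fun h ↦ hpc2 (by rw [sq]; exact mul_dvd_mul_left p h)
  refine hp.dvd_of_dvd_pow (n := 2) ((hp.dvd_or_dvd ?_).resolve_left hc)
  refine ⟨r * r + b * r * z.im - n, mul_left_cancel₀ hp.ne_zero ?_⟩
  rw [hr] at hn
  linear_combination -hn

theorem algebraMap_dvd_of_sq_dvd_norm [UniqueFactorizationMonoid R] {d : R} (hd : d ≠ 0)
    (hdb : ∀ p, Prime p → p ∣ d → p ∣ b) (hdc : ∀ p, Prime p → p ∣ d → p ∣ c)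
    (hdc2 : ∀ p, Prime p → p ∣ d → ¬ p ^ 2 ∣ c) {z : QuadraticAlgebra R c b}
    (hz : d ^ 2 ∣ z.norm) : algebraMap R _ d ∣ z := by
  induction d using UniqueFactorizationMonoid.induction_on_prime generalizing z with
  | h₁ => exact absurd rfl hd
  | h₂ d hu => exact (hu.map (algebraMap R _)).dvd
  | h₃ d p _ hp ih =>
    obtain ⟨w, rfl⟩ := algebraMap_dvd_of_sq_dvd_norm_of_prime hp (hdb p hp ⟨d, rfl⟩)
      (hdc p hp ⟨d, rfl⟩) (hdc2 p hp ⟨d, rfl⟩) ((pow_dvd_pow_of_dvd ⟨d, rfl⟩ 2).trans hz)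
    rw [map_mul, QuadraticAlgebra.norm_algebraMap, mul_pow,
      mul_dvd_mul_iff_left (pow_ne_zero 2 hp.ne_zero)] at hz
    rw [map_mul]
    exact mul_dvd_mul_left _ <| ih (right_ne_zero_of_mul hd)
      (fun q hq hqd ↦ hdb q hq (hqd.mul_left p)) (fun q hq hqd ↦ hdc q hq (hqd.mul_left p))
      (fun q hq hqd ↦ hdc2 q hq (hqd.mul_left p)) hz

end Divisibility

section Rescale

theorem isIntegral_star {R L : Type*} [CommRing R] [CommRing L] [Algebra R L] {a b : L}
    {z : QuadraticAlgebra L a b} (hz : IsIntegral R z) : IsIntegral R (star z) := by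
  refine hz.map_of_comp_eq (RingHom.id R) (starRingEnd _) (RingHom.ext fun r ↦ ?_)
  ext1 <;> simp [IsScalarTower.algebraMap_apply R L (QuadraticAlgebra L a b), starRingEnd_apply]

theorem isIntegral_trace {R L : Type*} [CommRing R] [CommRing L] [Algebra R L] {a b : L}
    {z : QuadraticAlgebra L a b} (hz : IsIntegral R z) : IsIntegral R z.trace := by
  rw [← isIntegral_algebraMap_iff (B := QuadraticAlgebra L a b)
    QuadraticAlgebra.algebraMap_injective, QuadraticAlgebra.algebraMap_trace_eq_add_star]
  exact hz.add (isIntegral_star hz)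

theorem isIntegral_norm {R L : Type*} [CommRing R] [CommRing L] [Algebra R L] {a b : L}
    {z : QuadraticAlgebra L a b} (hz : IsIntegral R z) : IsIntegral R z.norm := by
  rw [← isIntegral_algebraMap_iff (B := QuadraticAlgebra L a b)
    QuadraticAlgebra.algebraMap_injective, QuadraticAlgebra.algebraMap_norm_eq_mul_star]
  exact hz.mul (isIntegral_star hz)

theorem trace_eq_mul_im {R : Type*} [CommRing R] [CharP R 2] {a b : R}
    (z : QuadraticAlgebra R a b) : z.trace = b * z.im := by
  rw [QuadraticAlgebra.trace_def, CharTwo.two_eq_zero, zero_mul, zero_add]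

variable {R L : Type*} [CommRing R] [Field L] [Algebra R L] {b c : R}

/-- The `R`-algebra homomorphism substituting `ω = b y`, which turns the relation `ω² = c + b ω`
into the normal form `y² = c / b² + y`. -/
def rescale (hb : algebraMap R L b ≠ 0) :
    QuadraticAlgebra R c b →ₐ[R] QuadraticAlgebra L (algebraMap R L c / algebraMap R L b ^ 2) 1 :=
  QuadraticAlgebra.lift ⟨⟨0, algebraMap R L b⟩, by
    ext <;> simp [Algebra.smul_def (A := L)]
    field_simp⟩

theorem rescale_apply (hb : algebraMap R L b ≠ 0) (z : QuadraticAlgebra R c b) :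
    rescale hb z = ⟨algebraMap R L z.re, algebraMap R L b * algebraMap R L z.im⟩ := by
  ext <;> simp [rescale, Algebra.smul_def (A := L), mul_comm]

theorem rescale_injective [FaithfulSMul R L] (hb : algebraMap R L b ≠ 0) :
    Function.Injective (rescale (c := c) hb) := by
  intro z w h
  rw [rescale_apply, rescale_apply, QuadraticAlgebra.mk.injEq] at h
  have hinj := FaithfulSMul.algebraMap_injective R L
  exact QuadraticAlgebra.ext (hinj h.1) (hinj (mul_left_cancel₀ hb h.2))

theorem norm_rescale (hb : algebraMap R L b ≠ 0) (z : QuadraticAlgebra R c b) :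
    (rescale hb z).norm = algebraMap R L z.norm := by
  simp only [rescale_apply, QuadraticAlgebra.norm_def, map_sub, map_add, map_mul]
  field_simp

theorem isIntegral_rescale (hb : algebraMap R L b ≠ 0) (z : QuadraticAlgebra R c b) :
    IsIntegral R (rescale hb z) :=
  (Algebra.IsIntegral.isIntegral z).map _

theorem exists_rescale_eq_smul [CharP R 2] [IsIntegrallyClosed R] [IsFractionRing R L]
    (hb : algebraMap R L b ≠ 0)
    {z : QuadraticAlgebra L (algebraMap R L c / algebraMap R L b ^ 2) 1} (hz : IsIntegral R z) :
    ∃ w : QuadraticAlgebra R c b, rescale hb w = algebraMap R L b • z := by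
  have : CharP L 2 := charP_of_injective_algebraMap (IsFractionRing.injective R L) 2
  have him : z.trace = z.im := (trace_eq_mul_im z).trans (one_mul _)
  obtain ⟨t, ht⟩ := IsIntegrallyClosed.isIntegral_iff.1 (him ▸ isIntegral_trace hz)
  have hre : algebraMap R L b • z - rescale (c := c) hb ⟨0, t⟩ =
      algebraMap L _ (algebraMap R L b * z.re) := by
    rw [rescale_apply]
    ext <;> simp [Algebra.smul_def (A := L), ht]
  have hint : IsIntegral R (algebraMap R L b * z.re) := by
    rw [← isIntegral_algebraMap_iff (B := QuadraticAlgebra L _ 1)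
      QuadraticAlgebra.algebraMap_injective, ← hre, algebraMap_smul]
    exact (hz.smul b).sub (isIntegral_rescale hb _)
  obtain ⟨r, hr⟩ := IsIntegrallyClosed.isIntegral_iff.1 hint
  refine ⟨⟨r, t⟩, ?_⟩
  rw [rescale_apply]
  ext <;> simp [Algebra.smul_def (A := L), ht, hr]

theorem range_rescale [CharP R 2] [IsIntegrallyClosed R] [IsFractionRing R L]
    (hb : algebraMap R L b ≠ 0)
    (hdvd : ∀ w : QuadraticAlgebra R c b, b ^ 2 ∣ w.norm → algebraMap R _ b ∣ w) :
    (rescale (c := c) hb).range = integralClosure R _ := by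
  ext z
  refine ⟨?_, fun hz ↦ ?_⟩
  · rintro ⟨w, rfl⟩
    exact isIntegral_rescale hb w
  · obtain ⟨w, hw⟩ := exists_rescale_eq_smul hb hz
    obtain ⟨n, hn⟩ := IsIntegrallyClosed.isIntegral_iff.1 (isIntegral_norm hz)
    have hnorm : w.norm = b ^ 2 * n := by
      apply IsFractionRing.injective R L
      rw [← norm_rescale hb, hw, map_mul, hn, map_pow, Algebra.smul_def, map_mul,
        QuadraticAlgebra.norm_algebraMap]
    obtain ⟨v, rfl⟩ := hdvd w ⟨n, hnorm⟩
    refine ⟨v, ?_⟩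
    rw [map_mul, AlgHom.commutes, ← Algebra.smul_def, ← algebraMap_smul L] at hw
    exact smul_right_injective _ hb hw

end Rescale

/-- The two presentations `S[ω]` with `ω² = a + b ω` and `S[X] / (X² - b X - a)` of a quadratic
algebra. -/
noncomputable def quadraticAlgebraEquivAdjoinRoot {S : Type*} [CommRing S] {a b : S} {q : S[X]}
    (hq : q = X ^ 2 - C b * X - C a) : QuadraticAlgebra S a b ≃ₐ[S] AdjoinRoot q :=
  AlgEquiv.ofAlgHom
    (QuadraticAlgebra.lift ⟨AdjoinRoot.root q, by
      have h := AdjoinRoot.aeval_eq q ▸ AdjoinRoot.mk_self (f := q)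
      simp only [hq, map_sub, map_mul, map_pow, aeval_X, aeval_C] at h
      rw [Algebra.smul_def, Algebra.smul_def]
      linear_combination h⟩)
    (AdjoinRoot.liftAlgHom q (Algebra.ofId S _) QuadraticAlgebra.omega (by
      simp [hq, sq, QuadraticAlgebra.omega_mul_omega_eq_add, Algebra.smul_def]))
    (by ext; simp) (by ext <;> simp)

end IntegralClosure

/-! ### Hasse normal forms -/

section HasseNormalForm

variable {K : Type*} [Field K] {b c : K[X]}

/-- The conditions on the denominator `b` and numerator `c` of a Hasse normal form
`y² + y = c / b²`: for `b = ∏ pᵢ ^ nᵢ` with `nᵢ > 0`, the numerator is `g * ∏ pᵢ` with `g` prime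
to `b`, and `c / b²` has no pole of even order at infinity. -/
structure IsHasseNormalForm (b c : K[X]) : Prop where
  monic : b.Monic
  natDegree_pos : 0 < c.natDegree
  dvd_of_dvd : ∀ p, Prime p → p ∣ b → p ∣ c
  not_sq_dvd : ∀ p, Prime p → p ∣ b → ¬ p ^ 2 ∣ c
  le_or_odd : c.natDegree ≤ 2 * b.natDegree ∨ Odd c.natDegree

theorem associated_of_dvd_prod_pow {M ι : Type*} [CommMonoidWithZero M] [IsCancelMulZero M]
    [Fintype ι] {p : ι → M} (hp : ∀ i, Irreducible (p i)) {n : ι → ℕ} {r : M} (hr : Prime r)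
    (hdvd : r ∣ ∏ i, p i ^ n i) : ∃ i, Associated r (p i) := by
  obtain ⟨i, -, hi⟩ := hr.exists_mem_finset_dvd hdvd
  exact ⟨i, hr.irreducible.associated_of_dvd (hp i) (hr.dvd_of_dvd_pow hi)⟩

theorem not_sq_dvd_mul_prod {ι : Type*} [Fintype ι] {p : ι → K[X]} (hmonic : ∀ i, (p i).Monic)
    (hirr : ∀ i, Irreducible (p i)) (hinj : Function.Injective p) {g : K[X]} {i : ι}
    (hg : ¬ p i ∣ g) : ¬ p i ^ 2 ∣ g * ∏ j, p j := by
  classical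
  intro h
  rw [← Finset.mul_prod_erase _ p (Finset.mem_univ i), mul_left_comm, sq,
    mul_dvd_mul_iff_left (hirr i).ne_zero] at h
  obtain h | h := (hirr i).prime.dvd_or_dvd h
  · exact hg h
  · obtain ⟨j, hj, hij⟩ := (hirr i).prime.exists_mem_finset_dvd h
    have hassoc := (hirr i).associated_of_dvd (hirr j) hij
    exact Finset.ne_of_mem_erase hj
      (hinj (eq_of_monic_of_associated (hmonic i) (hmonic j) hassoc)).symm

theorem exists_unit_im_eq_one [CharP K 2] {α k : K} (hk : k ≠ 0)
    (hc : c = C (α ^ 2 + α) * b ^ 2 + C k * b) :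
    ∃ u : (QuadraticAlgebra K[X] c b)ˣ, u.val.im = 1 := by
  -- The witness is `b y' + k` for `y' = y + α`, which satisfies `y'² + y' = k / b`.
  have hnorm : (⟨C α * b + C k, 1⟩ : QuadraticAlgebra K[X] c b).norm = C (k ^ 2) := by
    rw [QuadraticAlgebra.norm_def, hc]
    simp only [map_add, map_pow]
    linear_combination (C α * b * C k) * CharTwo.two_eq_zero (R := K[X])
  have hunit := QuadraticAlgebra.isUnit_iff_norm_isUnit.2
    (hnorm ▸ isUnit_C.2 (pow_ne_zero 2 hk).isUnit)
  exact ⟨hunit.unit, rfl⟩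

namespace IsHasseNormalForm

theorem of_prod {ι : Type*} [Fintype ι] {p : ι → K[X]}
    (hmonic : ∀ i, (p i).Monic) (hirr : ∀ i, Irreducible (p i)) (hinj : Function.Injective p)
    {n : ι → ℕ} {g : K[X]} (hg : ∀ i, ¬ p i ∣ g) (hb : b = ∏ i, p i ^ n i)
    (hc : c = g * ∏ i, p i) (hpos : 0 < c.natDegree)
    (hpole : c.natDegree ≤ 2 * b.natDegree ∨ Odd c.natDegree) : IsHasseNormalForm b c where
  monic := hb ▸ monic_prod_of_monic _ _ fun i _ ↦ (hmonic i).pow (n i)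
  natDegree_pos := hpos
  dvd_of_dvd r hr hrb := by
    obtain ⟨i, hi⟩ := associated_of_dvd_prod_pow hirr hr (hb ▸ hrb)
    exact hi.dvd.trans (hc ▸ (Finset.dvd_prod_of_mem p (Finset.mem_univ i)).mul_left g)
  not_sq_dvd r hr hrb := by
    obtain ⟨i, hi⟩ := associated_of_dvd_prod_pow hirr hr (hb ▸ hrb)
    rw [hi.pow_pow.dvd_iff_dvd_left, hc]
    exact not_sq_dvd_mul_prod hmonic hirr hinj (hg i)
  le_or_odd := hpole

variable {u : (QuadraticAlgebra K[X] c b)ˣ}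

theorem natDegree_le (h : IsHasseNormalForm b c) (him : u.val.im ≠ 0) :
    c.natDegree ≤ 2 * b.natDegree := by
  obtain hle | heven := natDegree_le_two_mul_natDegree_or_even h.natDegree_pos him
  · exact hle
  · exact h.le_or_odd.resolve_right (Nat.not_odd_iff_even.2 heven)

theorem exists_eq_add_of_natDegree_sub_le_one (h : IsHasseNormalForm b c) (hb : b.natDegree = 1)
    {α : K} (hc : (c - C (α ^ 2 + α) * b ^ 2).natDegree ≤ 1) :
    ∃ k : K, k ≠ 0 ∧ c = C (α ^ 2 + α) * b ^ 2 + C k * b := by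
  have hprime : Prime b := (irreducible_of_degree_eq_one
    ((degree_eq_iff_natDegree_eq h.monic.ne_zero).2 hb)).prime
  have hdvd : b ∣ c - C (α ^ 2 + α) * b ^ 2 :=
    dvd_sub (h.dvd_of_dvd b hprime dvd_rfl) ((dvd_pow_self b two_ne_zero).mul_left _)
  obtain ⟨r, hr⟩ := hdvd
  have hr0 : r.natDegree = 0 := by
    obtain rfl | hr0 := eq_or_ne r 0
    · exact natDegree_zero
    · rw [hr, h.monic.natDegree_mul' hr0] at hc
      omega
  rw [eq_C_of_natDegree_eq_zero hr0] at hr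
  refine ⟨r.coeff 0, fun hk ↦ h.not_sq_dvd b hprime dvd_rfl ⟨C (α ^ 2 + α), ?_⟩, ?_⟩
  · rw [hk, C_0] at hr
    linear_combination hr
  · linear_combination hr

theorem exists_natDegree_sub_le_one (h : IsHasseNormalForm b c) (hb : b.natDegree = 1)
    (hc : c.natDegree ≤ 1 ∨ c.natDegree = 2 ∧ ∃ a : K, c.leadingCoeff = a ^ 2 + a) :
    ∃ α : K, (c - C (α ^ 2 + α) * b ^ 2).natDegree ≤ 1 := by
  obtain hc | ⟨hc, α, hα⟩ := hc
  · exact ⟨0, by simpa using hc⟩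
  · have hb2 : (b ^ 2).natDegree = 2 := by rw [natDegree_pow, hb]
    refine ⟨α, natDegree_le_pred (n := 2) ?_ ?_⟩
    · exact natDegree_sub_le_of_le hc.le ((natDegree_C_mul_le _ _).trans hb2.le)
    · have hlead := (h.monic.pow 2).coeff_natDegree
      rw [hb2] at hlead
      rw [coeff_sub, coeff_C_mul, hlead, ← hα, leadingCoeff, hc, mul_one, sub_self]

variable [CharP K 2]

theorem degree_trace_pos (h : IsHasseNormalForm b c) (him : u.val.im ≠ 0) :
    0 < u.val.trace.degree := by
  have := h.natDegree_le him
  have := h.natDegree_pos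
  rw [trace_eq_mul_im, ← natDegree_pos_iff_degree_pos, h.monic.natDegree_mul' him]
  omega

theorem natDegree_eq_one_of_isUnit_im (h : IsHasseNormalForm b c) (him : IsUnit u.val.im)
    (htr : u.val.trace.natDegree = 1) : b.natDegree = 1 := by
  rwa [trace_eq_mul_im, h.monic.natDegree_mul' him.ne_zero, natDegree_eq_zero_of_isUnit him,
    add_zero] at htr

theorem hasUnitSumNumberOmega_iff (h : IsHasseNormalForm b c) :
    HasUnitSumNumberOmega (QuadraticAlgebra K[X] c b) ↔ b.natDegree = 1 ∧
      (c.natDegree ≤ 1 ∨ c.natDegree = 2 ∧ ∃ a : K, c.leadingCoeff = a ^ 2 + a) := by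
  rw [hasUnitSumNumberOmega_iff_exists_isUnit_im fun _ ↦ h.degree_trace_pos]
  constructor
  · rintro ⟨u, him, htr⟩
    have hb := h.natDegree_eq_one_of_isUnit_im him htr
    have hle := h.natDegree_le him.ne_zero
    refine ⟨hb, or_iff_not_imp_left.2 fun hc ↦ ?_⟩
    have hcb : c.natDegree = 2 * b.natDegree := by omega
    exact ⟨by omega,
      exists_leadingCoeff_eq_of_natDegree_eq h.monic h.natDegree_pos hcb him.ne_zero⟩
  · rintro ⟨hb, hc⟩
    obtain ⟨α, hα⟩ := h.exists_natDegree_sub_le_one hb hc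
    obtain ⟨k, hk, hck⟩ := h.exists_eq_add_of_natDegree_sub_le_one hb hα
    obtain ⟨u, hu⟩ := exists_unit_im_eq_one hk hck
    exact ⟨u, hu ▸ isUnit_one, by rw [trace_eq_mul_im, hu, mul_one, hb]⟩

end IsHasseNormalForm

end HasseNormalForm

theorem unit_sum_number_quadratic_char_two_general {K L : Type*} [Field K] [CharP K 2] [Field L]
    [Algebra K[X] L] [IsFractionRing K[X] L] {b c : K[X]} (h : IsHasseNormalForm b c) {q : L[X]}
    (hq : q = X ^ 2 + X - C (algebraMap K[X] L c / algebraMap K[X] L b ^ 2)) :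
    SubringUnitSumNumberOmega (integralClosure K[X] (AdjoinRoot q)) ↔ b.natDegree = 1 ∧
      (c.natDegree ≤ 1 ∨ c.natDegree = 2 ∧ ∃ a : K, c.leadingCoeff = a ^ 2 + a) := by
  have : CharP L 2 := charP_of_injective_algebraMap (IsFractionRing.injective K[X] L) 2
  have hb : algebraMap K[X] L b ≠ 0 :=
    (map_ne_zero_iff _ (IsFractionRing.injective K[X] L)).2 h.monic.ne_zero
  have hq' : q = X ^ 2 - C 1 * X - C (algebraMap K[X] L c / algebraMap K[X] L b ^ 2) := by
    rw [hq, C_1, one_mul, CharTwo.sub_eq_add (X ^ 2)]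
  let e := (quadraticAlgebraEquivAdjoinRoot hq').restrictScalars K[X]
  have hrange : (e.toAlgHom.comp (rescale hb)).range = integralClosure K[X] _ := by
    rw [AlgHom.range_comp, range_rescale hb fun _ ↦ algebraMap_dvd_of_sq_dvd_norm
      h.monic.ne_zero (fun _ _ ↦ id) h.dvd_of_dvd h.not_sq_dvd, integralClosure_map_algEquiv]
  rw [← hrange, subringUnitSumNumberOmega_range_iff
    (e.injective.comp (rescale_injective hb)), h.hasUnitSumNumberOmega_iff]

end

/-- Classification of separable quadratic function fields in characteristic `2`, given by a
Hasse normal form `y² + y = C(x)/B(x)²`, whose rings of integers have unit sum number `ω`. -/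
theorem unit_sum_number_quadratic_char_two
    (K : Type*) [Field K] [Finite K] (hchar : ringChar K = 2)
    (m : ℕ) (p : Fin m → Polynomial K)
    (hpmonic : ∀ i, (p i).Monic) (hpirr : ∀ i, Irreducible (p i))
    (hpdist : Function.Injective p)
    (n : Fin m → ℕ) (hn : ∀ i, 0 < n i)
    (g : Polynomial K) (hg : ∀ i, ¬ p i ∣ g)
    (B C : Polynomial K)
    (hB : B = ∏ i, p i ^ n i) (hC : C = g * ∏ i, p i)
    (hCnonconst : 0 < C.natDegree)
    (hpole : 0 ≤ 2 * (B.natDegree : ℤ) - (C.natDegree : ℤ) ∨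
      Odd (2 * (B.natDegree : ℤ) - (C.natDegree : ℤ)))
    (q : Polynomial (RatFunc K))
    (hq : q = Polynomial.X ^ 2 + Polynomial.X - Polynomial.C
      (algebraMap (Polynomial K) (RatFunc K) C / (algebraMap (Polynomial K) (RatFunc K) B) ^ 2))
    (hirr : Irreducible q) :
    SubringUnitSumNumberOmega (integralClosure (Polynomial K) (AdjoinRoot q)) ↔
      B.natDegree = 1 ∧
        (C.natDegree ≤ 1 ∨ (C.natDegree = 2 ∧ ∃ a : K, C.leadingCoeff = a ^ 2 + a)) := by
  have : CharP K 2 := ringChar.of_eq hchar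
  refine unit_sum_number_quadratic_char_two_general
    (.of_prod hpmonic hpirr hpdist hg hB hC hCnonconst (hpole.imp ?_ ?_)) hq <;> grind
end

section
/- Let K be a perfect field, n ≥ 2 an integer, and α_2, …, α_n pairwise distinct elements of K. Let R be the localization of the polynomial ring K[X] away from the element q := (X − α_2)⋯(X − α_n), i.e., R = K[X][1/q] (for n = 2 the product consists of the single factor X − α_2). Then every element of R is a finite sum of units of R, and for every positive integer N there exists an element of R that is not a sum of at most N units of R (i.e., u(R) = ω). -/
/-- The unit sum number of `R` is `ω`: every element of `R` is a (nonempty) finite sum of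
units, but for every positive `N` some element of `R` is not a sum of at most `N` units. -/
def UnitSumNumberOmega (R : Type*) [CommRing R] : Prop :=
  (∀ r : R, ∃ (k : ℕ) (e : Fin k → Rˣ), 1 ≤ k ∧ r = ∑ i, (e i : R)) ∧
  ∀ N : ℕ, 0 < N →
    ∃ r : R, ¬ ∃ (k : ℕ) (e : Fin k → Rˣ), 1 ≤ k ∧ k ≤ N ∧ r = ∑ i, (e i : R)

/-!
For a root `a` of `q`, constants and `X - a` are sums of units of `R = K[X][1/q]`, hence so is
every element. For the lower bound, use that `Rˣ` is generated by `Kˣ` and the finitely many prime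
factors of `q`.

In characteristic `p`, let `F = K(X ^ p ^ N)`, over which `K(X)` has dimension `p ^ N > N` and which
contains all `p ^ N`-th powers. The quotient of `Rˣ` by the units lying in `F` is thus finitely
generated and torsion, hence finite, and all units lie on finitely many `F`-lines. Sums of at most
`N` units then lie in finitely many proper subspaces, which cannot cover `K(X)` since `F` is
infinite; clearing denominators by a `p ^ N`-th power moves an uncovered element into `R`.

In characteristic `0`, expand at a point `β` with `q(β) ≠ 0`. Every unit `u` satisfies
`q u' = L u` with `L` a polynomial of degree at most `deg q`. The Wronskian of a sum `∑ Pᵢ uᵢ` with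
its last summand is, up to the factor `q` and the last unit, a sum of the same form with one summand
fewer and polynomials of bounded degree. By induction, a sum of at most `N` units that vanishes at
`β` to sufficiently high order is `0`, so `(X - β) ^ M` is not such a sum when `M` is large.
-/

section SumsOfUnits

theorem exists_eq_sum_units_of_mem_closure {R : Type*} [Ring R] {r : R}
    (hr : r ∈ AddSubmonoid.closure {x : R | IsUnit x}) :
    ∃ (k : ℕ) (e : Fin k → Rˣ), 1 ≤ k ∧ r = ∑ i, (e i : R) := by
  induction hr using AddSubmonoid.closure_induction with
  | mem x hx =>
    obtain ⟨u, rfl⟩ := hx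
    exact ⟨1, fun _ => u, le_rfl, by simp⟩
  | zero => exact ⟨2, ![1, -1], by simp, by simp⟩
  | add x y _ _ hx hy =>
    obtain ⟨k, e, hk, rfl⟩ := hx
    obtain ⟨l, f, -, rfl⟩ := hy
    exact ⟨k + l, Fin.append e f, by lia, by simp [Fin.sum_univ_add]⟩

open Polynomial in
theorem mem_closure_isUnit_of_isLocalizationAway {K : Type*} [Field K] {q : K[X]} {a : K}
    (ha : q.IsRoot a) {R : Type*} [CommRing R] [Algebra K[X] R] [IsLocalization.Away q R] (r : R) :
    r ∈ AddSubmonoid.closure {x : R | IsUnit x} := by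
  let S : Subsemiring R := (IsUnit.submonoid R).subsemiringClosure
  have unit_mem {x : R} (hx : IsUnit x) : x ∈ S := AddSubmonoid.subset_closure hx
  have const_mem (c : K) : algebraMap K[X] R (C c) ∈ S := by
    rcases eq_or_ne c 0 with rfl | hc
    · simp
    · exact unit_mem ((isUnit_C.2 hc.isUnit).map _)
  have X_mem : algebraMap K[X] R X ∈ S := by
    have hXa : algebraMap K[X] R (X - C a) ∈ S :=
      unit_mem <| isUnit_of_dvd_unit (map_dvd _ (dvd_iff_isRoot.2 ha))
        (IsLocalization.Away.algebraMap_isUnit q)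
    simpa using S.add_mem hXa (const_mem a)
  have polynomial_mem (f : K[X]) : algebraMap K[X] R f ∈ S := by
    induction f using Polynomial.induction_on' with
    | add f g hf hg => simpa using S.add_mem hf hg
    | monomial n c =>
      rw [← C_mul_X_pow_eq_monomial, map_mul, map_pow]
      exact S.mul_mem (const_mem c) (S.pow_mem X_mem n)
  obtain ⟨n, f, hf⟩ := IsLocalization.Away.surj q r
  obtain ⟨w, hw⟩ := IsLocalization.Away.algebraMap_pow_isUnit (S := R) q n
  rw [← hw, ← Units.eq_mul_inv_iff_mul_eq] at hf
  exact hf ▸ S.mul_mem (polynomial_mem f) (unit_mem (Units.isUnit _))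

end SumsOfUnits

section UnitGroup

open UniqueFactorizationMonoid

/-- The units of an `A`-algebra `R` that are images of the chosen prime factors of `q`; when
`R = A[1/q]`, they generate `Rˣ` together with the units of `A`. -/
def primeFactorUnits {A : Type*} [CommRing A] [UniqueFactorizationMonoid A] (q : A)
    (R : Type*) [CommRing R] [Algebra A R] : Set Rˣ :=
  {u | ∃ p ∈ factors q, algebraMap A R p = u}

theorem finite_primeFactorUnits {A : Type*} [CommRing A] [UniqueFactorizationMonoid A] (q : A)
    (R : Type*) [CommRing R] [Algebra A R] : (primeFactorUnits q R).Finite := by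
  classical
  refine Set.Finite.of_finite_image ?_ Units.val_injective.injOn
  refine ((factors q).toFinset.image (algebraMap A R)).finite_toSet.subset ?_
  rintro _ ⟨u, ⟨p, hp, hpu⟩, rfl⟩
  simpa using ⟨p, hp, hpu⟩

theorem mem_range_sup_closure_primeFactorUnits_of_dvd_pow {A : Type*} [CommRing A] [IsDomain A]
    [UniqueFactorizationMonoid A] {q : A} (hq : q ≠ 0) {R : Type*} [CommRing R] [Algebra A R]
    [IsLocalization.Away q R] {a : A} {n : ℕ} (ha : a ∣ q ^ n) {u : Rˣ}
    (hu : algebraMap A R a = u) :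
    u ∈ (Units.map (algebraMap A R : A →* R)).range ⊔ Subgroup.closure (primeFactorUnits q R) := by
  set H := (Units.map (algebraMap A R : A →* R)).range ⊔ Subgroup.closure (primeFactorUnits q R)
  have const_mem (c : Aˣ) : Units.map (algebraMap A R : A →* R) c ∈ H :=
    Subgroup.mem_sup_left ⟨c, rfl⟩
  induction a using UniqueFactorizationMonoid.induction_on_prime generalizing u with
  | h₁ => exact absurd (zero_dvd_iff.1 ha) (pow_ne_zero n hq)
  | h₂ c hc => exact (Units.ext hu : Units.map (algebraMap A R : A →* R) hc.unit = u) ▸ const_mem _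
  | h₃ a p _ hp ih =>
    have isUnit_of_dvd {b : A} (hb : b ∣ q ^ n) : IsUnit (algebraMap A R b) :=
      (IsLocalization.Away.algebraMap_isUnit_iff q).2 ⟨n, hb⟩
    obtain ⟨v, hv⟩ := isUnit_of_dvd (dvd_of_mul_left_dvd ha)
    obtain ⟨w, hw⟩ := isUnit_of_dvd (b := p) (dvd_of_mul_right_dvd ha)
    obtain ⟨_, hpc, c, rfl⟩ := exists_mem_factors_of_dvd hq hp.irreducible
      (hp.dvd_of_dvd_pow (dvd_of_mul_right_dvd ha))
    have hwc : w * Units.map (algebraMap A R : A →* R) c ∈ H :=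
      Subgroup.mem_sup_right (Subgroup.subset_closure ⟨_, hpc, by simp [hw]⟩)
    have hw_mem : w ∈ H := (H.mul_mem_cancel_right (const_mem c)).1 hwc
    have huwv : u = w * v := Units.ext (by rw [← hu, map_mul, Units.val_mul, hw, hv])
    exact huwv ▸ H.mul_mem hw_mem (ih (dvd_of_mul_left_dvd ha) hv.symm)

theorem range_sup_closure_primeFactorUnits_eq_top {A : Type*} [CommRing A] [IsDomain A]
    [UniqueFactorizationMonoid A] {q : A} (hq : q ≠ 0) (R : Type*) [CommRing R] [Algebra A R]
    [IsLocalization.Away q R] :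
    (Units.map (algebraMap A R : A →* R)).range ⊔ Subgroup.closure (primeFactorUnits q R) = ⊤ := by
  refine (Subgroup.eq_top_iff' _).2 fun u => ?_
  obtain ⟨n, a, ha⟩ := IsLocalization.Away.surj q (u : R)
  obtain ⟨w, hw⟩ := IsLocalization.Away.algebraMap_pow_isUnit (S := R) q n
  have huw : algebraMap A R a = (u * w : Rˣ) := by rw [Units.val_mul, hw, ha]
  obtain ⟨m, ham⟩ := (IsLocalization.Away.algebraMap_isUnit_iff q).1 ⟨u * w, huw.symm⟩
  rw [← Subgroup.mul_mem_cancel_right _ <|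
    mem_range_sup_closure_primeFactorUnits_of_dvd_pow hq (n := n) dvd_rfl (by rw [hw, map_pow])]
  exact mem_range_sup_closure_primeFactorUnits_of_dvd_pow hq ham huw

end UnitGroup

theorem finiteIndex_of_sup_closure_eq_top {G : Type*} [CommGroup G] {H : Subgroup G}
    {S : Set G} (hS : S.Finite) (hHS : H ⊔ Subgroup.closure S = ⊤) {M : ℕ} (hM : 0 < M)
    (hpow : ∀ g : G, g ^ M ∈ H) : H.FiniteIndex := by
  have hgen : Subgroup.closure (QuotientGroup.mk' H '' S) = ⊤ := by
    rw [← MonoidHom.map_closure, ← bot_sup_eq (Subgroup.map _ _), ← QuotientGroup.map_mk'_self H,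
      ← Subgroup.map_sup, hHS, ← MonoidHom.range_eq_map, QuotientGroup.range_mk']
  have : Group.FG (G ⧸ H) := Group.fg_iff.2 ⟨_, hgen, hS.image _⟩
  have htors : IsMulTorsion (G ⧸ H) := by
    refine fun x => isOfFinOrder_iff_pow_eq_one.2 ⟨M, hM, ?_⟩
    induction x using QuotientGroup.induction_on with
    | H g => exact (QuotientGroup.eq_one_iff (g ^ M)).2 (hpow g)
  have := CommGroup.finite_of_fg_isMulTorsion _ htors
  exact Subgroup.finiteIndex_of_finite_quotient

theorem exists_forall_notMem_span_range {F V : Type*} [DivisionRing F] [Infinite F] [AddCommGroup V]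
    [Module F V] {ι : Type*} [Finite ι] (b : ι → V) {N : ℕ} (hN : N < Module.finrank F V) :
    ∃ w : V, ∀ k ≤ N, ∀ e : Fin k → ι, w ∉ Submodule.span F (Set.range (b ∘ e)) := by
  by_contra! hcover
  let W : (Σ k : Fin (N + 1), Fin k → ι) → Submodule F V :=
    fun t => Submodule.span F (Set.range (b ∘ t.2))
  obtain ⟨⟨k, e⟩, htop⟩ : ∃ t, W t = ⊤ := by
    refine Subspace.exists_eq_top_of_iUnion_eq_univ (Set.eq_univ_of_forall fun w => ?_)
    obtain ⟨k, hk, e, hw⟩ := hcover w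
    exact Set.mem_iUnion.2 ⟨⟨⟨k, by lia⟩, e⟩, hw⟩
  have hrank : Module.finrank F (W ⟨k, e⟩) ≤ k :=
    (finrank_range_le_card (b ∘ e)).trans_eq (Fintype.card_fin k)
  rw [htop, finrank_top] at hrank
  lia

theorem infinite_of_finrank_pos {F V : Type*} [DivisionRing F] [AddCommGroup V] [Module F V]
    [Infinite V] (h : 0 < Module.finrank F V) : Infinite F := by
  have := Module.finite_of_finrank_pos h
  by_contra! _
  have := Module.finite_of_finite F (M := V)
  exact not_finite V

section UnitsModSubfield

variable {R E : Type*} (F : Type*) [Ring R] [Field F] [Field E] [Algebra F E]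

/-- The units of `R` that a ring homomorphism `φ` to an extension of the field `F` maps into `F`. -/
def unitsMappedInto (φ : R →+* E) : Subgroup Rˣ :=
  (Units.map (algebraMap F E : F →* E)).range.comap (Units.map (φ : R →* E))

variable {F} in
theorem mem_unitsMappedInto {φ : R →+* E} {u : Rˣ} :
    u ∈ unitsMappedInto F φ ↔ ∃ y : F, algebraMap F E y = φ u := by
  refine ⟨fun ⟨y, hy⟩ => ⟨y, congr_arg Units.val hy⟩, fun ⟨y, hy⟩ => ?_⟩
  have hy0 : y ≠ 0 := by
    rintro rfl
    exact (u.isUnit.map φ).ne_zero (by rw [← hy, map_zero])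
  exact ⟨Units.mk0 y hy0, Units.ext hy⟩

theorem exists_ne_sum_units_of_finiteIndex [Infinite F] {φ : R →+* E}
    [(unitsMappedInto F φ).FiniteIndex] (hscale : ∀ w : E, ∃ c : F, c ≠ 0 ∧ c • w ∈ φ.range)
    {N : ℕ} (hN : N < Module.finrank F E) :
    ∃ r : R, ∀ k ≤ N, ∀ e : Fin k → Rˣ, r ≠ ∑ i, (e i : R) := by
  let H := unitsMappedInto F φ
  let b : Rˣ ⧸ H → E := fun x => φ x.out
  have exists_eq_smul (u : Rˣ) : ∃ y : F, φ u = y • b u := by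
    obtain ⟨y, hy⟩ := mem_unitsMappedInto.1 (QuotientGroup.eq.1 (Quotient.out_eq (u : Rˣ ⧸ H)))
    exact ⟨y, by
      rw [Algebra.smul_def, hy, mul_comm, ← map_mul, ← Units.val_mul, mul_inv_cancel_left]⟩
  obtain ⟨w, hw⟩ := exists_forall_notMem_span_range (F := F) b hN
  obtain ⟨c, hc, r, hr⟩ := hscale w
  refine ⟨r, fun k hk e he => hw k hk (fun i => e i) ?_⟩
  rw [← Submodule.smul_mem_iff _ hc, ← hr, he, map_sum]
  refine Submodule.sum_mem _ fun i _ => ?_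
  obtain ⟨y, hy⟩ := exists_eq_smul (e i)
  exact hy ▸ Submodule.smul_mem _ y (Submodule.subset_span ⟨i, rfl⟩)

end UnitsModSubfield

section CharP

open Polynomial IntermediateField

variable {K : Type*} [Field K]

theorem ratFunc_finrank_adjoin_X_pow (M : ℕ) :
    Module.finrank K⟮(RatFunc.X : RatFunc K) ^ M⟯ (RatFunc K) = M := by
  rw [RatFunc.finrank_eq_max_natDegree, ← RatFunc.algebraMap_X, ← map_pow, RatFunc.num_algebraMap,
    RatFunc.denom_algebraMap]
  simp

theorem ratFunc_pow_mem_adjoin_X_pow (p : ℕ) [ExpChar K p] (N : ℕ) (f : RatFunc K) :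
    f ^ p ^ N ∈ K⟮(RatFunc.X : RatFunc K) ^ p ^ N⟯ := by
  have polynomial_mem (a : K[X]) :
      algebraMap K[X] (RatFunc K) a ^ p ^ N ∈ K⟮(RatFunc.X : RatFunc K) ^ p ^ N⟯ := by
    rw [← map_pow, ← map_iterateFrobenius_expand p, map_expand,
      ← RatFunc.aeval_X_left_eq_algebraMap, expand_aeval]
    exact algebra_adjoin_le_adjoin _ _ (aeval_mem_adjoin_singleton _ _)
  rw [← f.num_div_denom, div_pow]
  exact div_mem (polynomial_mem _) (polynomial_mem _)

theorem finiteIndex_unitsMappedInto_adjoin_X_pow (p : ℕ) [ExpChar K p] {q : K[X]} (hq : q ≠ 0)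
    {R : Type*} [CommRing R] [Algebra K[X] R] [IsLocalization.Away q R]
    (φ : R →ₐ[K[X]] RatFunc K) (N : ℕ) :
    (unitsMappedInto K⟮(RatFunc.X : RatFunc K) ^ p ^ N⟯ φ.toRingHom).FiniteIndex := by
  have hrange : (Units.map (algebraMap K[X] R : K[X] →* R)).range ≤
      unitsMappedInto K⟮(RatFunc.X : RatFunc K) ^ p ^ N⟯ φ.toRingHom := by
    rintro _ ⟨c, rfl⟩
    obtain ⟨c', -, hc⟩ := Polynomial.isUnit_iff.1 c.isUnit
    refine mem_unitsMappedInto.2 ⟨algebraMap K _ c', ?_⟩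
    simp [← hc, ← IsScalarTower.algebraMap_apply]
  refine finiteIndex_of_sup_closure_eq_top (finite_primeFactorUnits q R)
    (top_unique ?_) (expChar_pow_pos K p N) fun u => ?_
  · rw [← range_sup_closure_primeFactorUnits_eq_top hq R]
    exact sup_le_sup_right hrange _
  · exact mem_unitsMappedInto.2 ⟨⟨_, ratFunc_pow_mem_adjoin_X_pow p N (φ u)⟩, by simp⟩

theorem exists_ne_sum_units_of_charP (p : ℕ) [Fact p.Prime] [CharP K p] {q : K[X]} (hq : q ≠ 0)
    (R : Type*) [CommRing R] [Algebra K[X] R] [IsLocalization.Away q R] (N : ℕ) :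
    ∃ r : R, ∀ k ≤ N, ∀ e : Fin k → Rˣ, r ≠ ∑ i, (e i : R) := by
  have : ExpChar K p := .prime Fact.out
  let F := K⟮(RatFunc.X : RatFunc K) ^ p ^ N⟯
  let φ : R →ₐ[K[X]] RatFunc K :=
    IsLocalization.Away.liftAlgHom q (f := Algebra.ofId K[X] (RatFunc K))
      (RatFunc.algebraMap_ne_zero hq).isUnit
  have hfinrank : Module.finrank F (RatFunc K) = p ^ N := ratFunc_finrank_adjoin_X_pow _
  have : Infinite (RatFunc K) := .of_injective _ (RatFunc.algebraMap_injective K)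
  have : Infinite F := infinite_of_finrank_pos (hfinrank ▸ expChar_pow_pos K p N)
  have := finiteIndex_unitsMappedInto_adjoin_X_pow p hq φ N
  refine exists_ne_sum_units_of_finiteIndex F (φ := φ.toRingHom) (fun w => ?_)
    (hfinrank ▸ N.lt_pow_self (Fact.out : p.Prime).one_lt)
  let D : RatFunc K := algebraMap K[X] (RatFunc K) w.denom
  have hD : D ≠ 0 := RatFunc.algebraMap_ne_zero w.denom_ne_zero
  have hDw : algebraMap K[X] (RatFunc K) w.num = w * D := (div_eq_iff hD).1 w.num_div_denom
  refine ⟨⟨D ^ p ^ N, ratFunc_pow_mem_adjoin_X_pow p N D⟩, fun h => ?_,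
    algebraMap K[X] R (w.denom ^ (p ^ N - 1) * w.num), ?_⟩
  · exact pow_ne_zero _ hD (congr_arg Subtype.val h)
  · rw [Algebra.smul_def]
    change φ _ = D ^ p ^ N * w
    rw [φ.commutes, map_mul, map_pow, hDw, mul_left_comm,
      pow_sub_one_mul (expChar_pow_pos K p N).ne', mul_comm]

end CharP

section VanishingOrder

open PowerSeries

variable {A : Type*} [CommRing A]

/-- The power series units `u` whose logarithmic derivative `u' / u` has the form `L / Q` for a
polynomial `L` of degree at most `deg Q`. -/
def unitsWithPolynomialLogDeriv (Q : Polynomial A) : Subgroup A⟦X⟧ˣ where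
  carrier := {u | ∃ L : Polynomial A, L.natDegree ≤ Q.natDegree ∧
    (Q : A⟦X⟧) * d⁄dX A (u : A⟦X⟧) = L * u}
  one_mem' := ⟨0, by simp, by simp⟩
  mul_mem' := by
    rintro u v ⟨L, hL, hu⟩ ⟨L', hL', hv⟩
    refine ⟨L + L', Polynomial.natDegree_add_le_of_degree_le hL hL', ?_⟩
    rw [Units.val_mul, Derivation.leibniz, smul_eq_mul, smul_eq_mul, Polynomial.coe_add]
    linear_combination (v : A⟦X⟧) * hu + (u : A⟦X⟧) * hv
  inv_mem' := by
    rintro u ⟨L, hL, hu⟩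
    refine ⟨-L, by simpa using hL, ?_⟩
    rw [derivative_inv, Polynomial.coe_neg]
    linear_combination (-(↑u⁻¹ : A⟦X⟧) ^ 2) * hu - (L : A⟦X⟧) * (↑u⁻¹ : A⟦X⟧) * u.mul_inv

theorem exists_wronskian_eq {Q : Polynomial A} {u v : A⟦X⟧ˣ}
    (hu : u ∈ unitsWithPolynomialLogDeriv Q) (hv : v ∈ unitsWithPolynomialLogDeriv Q) {d : ℕ}
    {F G : Polynomial A} (hF : F.natDegree ≤ d) (hG : G.natDegree ≤ d) :
    ∃ C : Polynomial A, C.natDegree ≤ Q.natDegree + 2 * d ∧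
      (Q : A⟦X⟧) * (F * u * d⁄dX A (G * v : A⟦X⟧) - G * v * d⁄dX A (F * u : A⟦X⟧)) =
        u * (C * v) := by
  obtain ⟨L, hL, hu⟩ := hu
  obtain ⟨L', hL', hv⟩ := hv
  refine ⟨Q * F.wronskian G + (L' - L) * (F * G), ?_, ?_⟩
  · have hFG : (F * G).natDegree ≤ 2 * d := Polynomial.natDegree_mul_le.trans (by lia)
    have hW : (F.wronskian G).natDegree ≤ 2 * d := by
      have := F.natDegree_derivative_le
      have := G.natDegree_derivative_le
      exact (Polynomial.natDegree_sub_le_of_le Polynomial.natDegree_mul_le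
        Polynomial.natDegree_mul_le).trans (by lia)
    have hLL' : (L' - L).natDegree ≤ Q.natDegree :=
      (Polynomial.natDegree_sub_le_of_le hL' hL).trans (max_self _).le
    exact Polynomial.natDegree_add_le_of_degree_le
      (Polynomial.natDegree_mul_le_of_le le_rfl hW) (Polynomial.natDegree_mul_le_of_le hLL' hFG)
  · simp only [Derivation.leibniz, smul_eq_mul, derivative_coe, Polynomial.wronskian,
      Polynomial.coe_add, Polynomial.coe_sub, Polynomial.coe_mul]
    linear_combination (F * G * u : A⟦X⟧) * hv - (F * G * v : A⟦X⟧) * hu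

variable [IsDomain A]

theorem mem_unitsWithPolynomialLogDeriv_of_dvd {P Q : Polynomial A} (hQ : Q ≠ 0) (hPQ : P ∣ Q)
    {u : A⟦X⟧ˣ} (hu : (P : A⟦X⟧) = u) : u ∈ unitsWithPolynomialLogDeriv Q := by
  obtain ⟨P', rfl⟩ := hPQ
  refine ⟨P' * Polynomial.derivative P, ?_, ?_⟩
  · rw [mul_comm P, Polynomial.natDegree_mul (right_ne_zero_of_mul hQ) (left_ne_zero_of_mul hQ)]
    exact Polynomial.natDegree_mul_le.trans
      (Nat.add_le_add_left ((Polynomial.natDegree_derivative_le P).trans (Nat.sub_le _ _)) _)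
  · rw [← hu, derivative_coe, Polynomial.coe_mul, Polynomial.coe_mul]
    ring

theorem X_mul_derivative_X_pow_mul {R : Type*} [CommSemiring R] (n : ℕ) (f : R⟦X⟧) :
    X * d⁄dX R (X ^ n * f) = X ^ n * ((n : R⟦X⟧) * f + X * d⁄dX R f) := by
  cases n with
  | zero => simp
  | succ n =>
    simp only [Derivation.leibniz, Derivation.leibniz_pow, derivative_X, smul_eq_mul, nsmul_eq_mul,
      Nat.add_sub_cancel]
    ring

theorem exists_order_eq_and_eq_X_pow_mul {R : Type*} [Semiring R] {f : R⟦X⟧} (hf : f ≠ 0) :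
    ∃ (n : ℕ) (f₀ : R⟦X⟧), f.order = n ∧ constantCoeff f₀ ≠ 0 ∧ f = X ^ n * f₀ :=
  ⟨_, _, (coe_toNat_order hf).symm, constantCoeff_divXPowOrder_eq_zero_iff.not.2 hf,
    X_pow_order_mul_divXPowOrder.symm⟩

theorem X_pow_dvd_derivative {R : Type*} [CommSemiring R] {f : R⟦X⟧} {n : ℕ}
    (h : X ^ (n + 1) ∣ f) : X ^ n ∣ d⁄dX R f := by
  rw [X_pow_dvd_iff] at h ⊢
  intro m hm
  rw [coeff_derivative, h (m + 1) (by lia), zero_mul]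

theorem order_eq_order_of_wronskian_eq_zero [CharZero A] {f g : A⟦X⟧} (hf : f ≠ 0) (hg : g ≠ 0)
    (h : f * d⁄dX A g - g * d⁄dX A f = 0) : f.order = g.order := by
  obtain ⟨m, f₀, hm, hf₀, rfl⟩ := exists_order_eq_and_eq_X_pow_mul hf
  obtain ⟨n, g₀, hn, hg₀, rfl⟩ := exists_order_eq_and_eq_X_pow_mul hg
  have hlead : ((n : A⟦X⟧) - (m : A⟦X⟧)) * (f₀ * g₀) +
      X * (f₀ * d⁄dX A g₀ - g₀ * d⁄dX A f₀) = 0 := by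
    refine (mul_eq_zero.1 ?_).resolve_left (pow_ne_zero (m + n) X_ne_zero)
    linear_combination X * h - X ^ m * f₀ * X_mul_derivative_X_pow_mul n g₀ +
      X ^ n * g₀ * X_mul_derivative_X_pow_mul m f₀
  have hnm : (n - m : A) = 0 := by simpa [hf₀, hg₀] using congr_arg constantCoeff hlead
  rw [hm, hn, Nat.cast_injective (sub_eq_zero.1 hnm)]

theorem order_coe_mul_unit_le {P : Polynomial A} (hP : P ≠ 0) (u : A⟦X⟧ˣ) :
    ((P : A⟦X⟧) * (u : A⟦X⟧)).order ≤ P.natDegree := by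
  rw [order_mul, order_zero_of_unit u.isUnit, add_zero]
  exact order_le _ (by simpa using hP)

/-- `M` bounds the order of vanishing at `0` of the nonzero sums `P₁ u₁ + ⋯ + Pₖ uₖ` with `k ≤ N`,
polynomials `Pᵢ` of degree at most `d` and `uᵢ ∈ unitsWithPolynomialLogDeriv Q`. -/
def BoundsVanishingOrder (Q : Polynomial A) (N d M : ℕ) : Prop :=
  ∀ k ≤ N, ∀ (P : Fin k → Polynomial A) (u : Fin k → A⟦X⟧ˣ),
    (∀ i, (P i).natDegree ≤ d) → (∀ i, u i ∈ unitsWithPolynomialLogDeriv Q) →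
    X ^ M ∣ ∑ i, (P i : A⟦X⟧) * (u i : A⟦X⟧) → ∑ i, (P i : A⟦X⟧) * (u i : A⟦X⟧) = 0

theorem BoundsVanishingOrder.wronskian_eq_zero {Q : Polynomial A} (hQ : Q ≠ 0) {N d M k : ℕ}
    (hM : BoundsVanishingOrder Q N (Q.natDegree + 2 * d) M) (hk : k ≤ N)
    {P : Fin (k + 1) → Polynomial A} {u : Fin (k + 1) → A⟦X⟧ˣ} (hP : ∀ i, (P i).natDegree ≤ d)
    (hu : ∀ i, u i ∈ unitsWithPolynomialLogDeriv Q) {f S : A⟦X⟧}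
    (hf : f = (P (Fin.last k) : A⟦X⟧) * (u (Fin.last k) : A⟦X⟧))
    (hS : S = ∑ i, (P i : A⟦X⟧) * (u i : A⟦X⟧)) (hdvd : X ^ (M + 1) ∣ S) :
    f * d⁄dX A S - S * d⁄dX A f = 0 := by
  -- The last summand drops out of the Wronskian of `f` and `S`, as that of `f` with itself is `0`.
  choose C hC hW using fun i : Fin k =>
    exists_wronskian_eq (hu (Fin.last k)) (hu i.castSucc) (hP (Fin.last k)) (hP i.castSucc)
  have hQW : (Q : A⟦X⟧) * (f * d⁄dX A S - S * d⁄dX A f) =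
      (u (Fin.last k) : A⟦X⟧) * ∑ i, (C i : A⟦X⟧) * (u i.castSucc : A⟦X⟧) := by
    rw [Finset.mul_sum, ← Finset.sum_congr rfl fun i _ => hW i, ← Finset.mul_sum,
      Finset.sum_sub_distrib, ← Finset.mul_sum, ← Finset.sum_mul, ← map_sum, ← hf, hS,
      Fin.sum_univ_castSucc, ← hf, map_add]
    ring
  have hdvd_sum : X ^ M ∣ ∑ i, (C i : A⟦X⟧) * (u i.castSucc : A⟦X⟧) := by
    rw [← (u (Fin.last k)).isUnit.dvd_mul_left, ← hQW]
    exact dvd_mul_of_dvd_right (dvd_sub (dvd_mul_of_dvd_right (X_pow_dvd_derivative hdvd) _)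
      (dvd_mul_of_dvd_left ((pow_dvd_pow X M.le_succ).trans hdvd) _)) _
  rw [hM k hk C _ hC (fun i => hu _) hdvd_sum, mul_zero] at hQW
  exact (mul_eq_zero.1 hQW).resolve_left (mt Polynomial.coe_eq_zero_iff.1 hQ)

theorem BoundsVanishingOrder.succ [CharZero A] {Q : Polynomial A} (hQ : Q ≠ 0) {N d M : ℕ}
    (hM : BoundsVanishingOrder Q N (Q.natDegree + 2 * d) M) :
    BoundsVanishingOrder Q (N + 1) d (M + d + 1) := by
  rintro (_ | k) hk P u hP hu hdvd
  · exact Fin.sum_univ_zero _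
  have hk : k ≤ N := Nat.le_of_succ_le_succ hk
  by_cases hlast : P (Fin.last k) = 0
  · simp only [Fin.sum_univ_castSucc, hlast, Polynomial.coe_zero, zero_mul, add_zero] at hdvd ⊢
    exact hM k hk _ _ (fun i => (hP _).trans (by lia)) (fun i => hu _)
      ((pow_dvd_pow X (by lia)).trans hdvd)
  · by_contra hS
    have hlast_order := order_coe_mul_unit_le hlast (u (Fin.last k))
    rw [order_eq_order_of_wronskian_eq_zero
      (mul_ne_zero (mt Polynomial.coe_eq_zero_iff.1 hlast) (u _).ne_zero) hS
      (hM.wronskian_eq_zero hQ hk hP hu rfl rfl ((pow_dvd_pow X (by lia)).trans hdvd))]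
      at hlast_order
    have hsum_order := nat_le_order _ _ (X_pow_dvd_iff.1 hdvd)
    have hle : M + d + 1 ≤ (P (Fin.last k)).natDegree := by
      exact_mod_cast hsum_order.trans hlast_order
    exact absurd (hle.trans (hP _)) (by lia)

theorem exists_boundsVanishingOrder [CharZero A] {Q : Polynomial A} (hQ : Q ≠ 0) (N d : ℕ) :
    ∃ M, BoundsVanishingOrder Q N d M := by
  induction N generalizing d with
  | zero =>
    refine ⟨0, fun k hk P u _ _ _ => ?_⟩
    obtain rfl := Nat.le_zero.1 hk
    exact Fin.sum_univ_zero _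
  | succ N ih =>
    obtain ⟨M, hM⟩ := ih (Q.natDegree + 2 * d)
    exact ⟨_, hM.succ hQ⟩

end VanishingOrder

section CharZero

open Polynomial

theorem map_units_mem_unitsWithPolynomialLogDeriv {A B : Type*} [CommRing A] [IsDomain A]
    [UniqueFactorizationMonoid A] [CommRing B] [IsDomain B] {q : A} {R : Type*} [CommRing R]
    [Algebra A R] [IsLocalization.Away q R] (ψ : A →+* B[X]) (hψ : ψ q ≠ 0)
    (φ : R →+* PowerSeries B) (hφ : ∀ a, φ (algebraMap A R a) = ψ a) (u : Rˣ) :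
    Units.map (φ : R →* PowerSeries B) u ∈ unitsWithPolynomialLogDeriv (ψ q) := by
  have hq : q ≠ 0 := fun h => hψ (by rw [h, map_zero])
  have mem_of_dvd {a : A} (ha : a ∣ q) {v : Rˣ} (hv : algebraMap A R a = v) :
      v ∈ (unitsWithPolynomialLogDeriv (ψ q)).comap (Units.map (φ : R →* PowerSeries B)) :=
    mem_unitsWithPolynomialLogDeriv_of_dvd hψ (map_dvd ψ ha) (by simp [← hφ, hv])
  have hle : (Units.map (algebraMap A R : A →* R)).range ⊔
      Subgroup.closure (primeFactorUnits q R) ≤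
        (unitsWithPolynomialLogDeriv (ψ q)).comap (Units.map (φ : R →* PowerSeries B)) := by
    refine sup_le ?_ ((Subgroup.closure_le _).2 ?_)
    · rintro _ ⟨c, rfl⟩
      exact mem_of_dvd c.isUnit.dvd rfl
    · rintro v ⟨p, hp, hv⟩
      exact mem_of_dvd (UniqueFactorizationMonoid.dvd_of_mem_factors hp) hv
  exact hle (range_sup_closure_primeFactorUnits_eq_top hq R ▸ Subgroup.mem_top u)

theorem exists_ne_sum_units_of_charZero {K : Type*} [Field K] [CharZero K] {q : K[X]} (hq : q ≠ 0)
    (R : Type*) [CommRing R] [Algebra K[X] R] [IsLocalization.Away q R] (N : ℕ) :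
    ∃ r : R, ∀ k ≤ N, ∀ e : Fin k → Rˣ, r ≠ ∑ i, (e i : R) := by
  obtain ⟨β, hβ⟩ : ∃ β, q.eval β ≠ 0 := by
    by_contra! h
    exact hq (zero_of_eval_zero q h)
  let ψ : K[X] →+* K[X] := (taylorAlgHom β).toRingHom
  have hψq : ψ q ≠ 0 := (taylor_eq_zero β q).not.2 hq
  have isUnit_ψq : IsUnit (coeToPowerSeries.ringHom.comp ψ q) := by
    simp [ψ, PowerSeries.isUnit_iff_constantCoeff, hβ]
  let φ : R →+* PowerSeries K := IsLocalization.Away.lift q isUnit_ψq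
  have hφ (f : K[X]) : φ (algebraMap K[X] R f) = ψ f := IsLocalization.Away.lift_eq q isUnit_ψq f
  obtain ⟨M, hM⟩ := exists_boundsVanishingOrder hψq N 0
  refine ⟨algebraMap K[X] R ((X - C β) ^ M), fun k hk e he => ?_⟩
  have hsum : PowerSeries.X ^ M = ∑ i, ((1 : K[X]) : PowerSeries K) *
      (Units.map (φ : R →* PowerSeries K) (e i) : PowerSeries K) := by
    calc PowerSeries.X ^ M = φ (algebraMap K[X] R ((X - C β) ^ M)) := by simp [hφ, ψ]
      _ = _ := by simp [he]
  refine pow_ne_zero (M₀ := PowerSeries K) M PowerSeries.X_ne_zero (hsum.trans ?_)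
  exact hM k hk _ _ (by simp) (fun i => map_units_mem_unitsWithPolynomialLogDeriv ψ hψq φ hφ (e i))
    hsum.dvd

end CharZero

open Polynomial in
theorem unit_sum_number_localized_polynomial_ring_general {K : Type*} [Field K] {q : K[X]}
    (hq : q ≠ 0) {a : K} (ha : q.IsRoot a) (R : Type*) [CommRing R] [Algebra K[X] R]
    [IsLocalization.Away q R] : UnitSumNumberOmega R := by
  refine ⟨fun r => exists_eq_sum_units_of_mem_closure
    (mem_closure_isUnit_of_isLocalizationAway ha r), fun N _ => ?_⟩
  have exists_ne_sum : ∃ r : R, ∀ k ≤ N, ∀ e : Fin k → Rˣ, r ≠ ∑ i, (e i : R) := by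
    rcases CharP.exists' K with _ | ⟨p, _, _⟩
    · exact exists_ne_sum_units_of_charZero hq R N
    · exact exists_ne_sum_units_of_charP p hq R N
  obtain ⟨r, hr⟩ := exists_ne_sum
  exact ⟨r, fun ⟨k, e, _, hk, he⟩ => hr k hk e he⟩

/-- For a perfect field `K`, `n ≥ 2` and pairwise distinct `α_2, …, α_n ∈ K`
(indexed here by `Fin (n-1)`), the localization `K[X][1/q]` with
`q = (X - α_2)⋯(X - α_n)` has unit sum number `ω`. -/
theorem unit_sum_number_localized_polynomial_ring
    (K : Type*) [Field K] [PerfectField K]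
    (n : ℕ) (hn : 2 ≤ n) (α : Fin (n - 1) → K) (hα : Function.Injective α) :
    UnitSumNumberOmega
      (Localization.Away (∏ i, (Polynomial.X - Polynomial.C (α i)))) :=
  unit_sum_number_localized_polynomial_ring_general
    (Finset.prod_ne_zero_iff.2 fun i _ => Polynomial.X_sub_C_ne_zero (α i))
    (Polynomial.dvd_iff_isRoot.1 (Finset.dvd_prod_of_mem _ (Finset.mem_univ ⟨0, by lia⟩))) _
end

section
/- Let K be a finite field of odd characteristic and f ∈ K[X] a nonconstant squarefree (separable) polynomial. Let R := K[x][y] = K[X,Y]/(Y² − f(X)), regarded as a module over K[x]. Then R is generated by its units as a K[x]-module if and only if there exists μ ∈ K, μ ≠ 0, such that f + μ is a square in K[X]. -/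
/-!
Write `v = v.re + v.im * y` for the elements of `R = K[x][y]`. Since `1` is a unit, the units
generate `R` over `K[x]` exactly when the coefficients `u.im` of the units `u` generate the unit
ideal of `K[x]`. This ideal is generated by the coefficient `v.im` of a single unit `v`. If `f` is
constant, or if the characteristic is two and some `u.im` is nonzero, there even is a unit `v` with
`v.im` a nonzero constant. Otherwise take `v` with `v.im ≠ 0` of least degree, if there is one. If
`u` is another unit, the coefficients of `u * v` and of `star u * v` have product
`norm u * v.im ^ 2 - norm v * u.im ^ 2` and difference `2 * u.im * v.re`, so one of them has degree
smaller than `u.im`, and an infinite descent shows `v.im ∣ u.im`. Finally, a unit `v` with `v.im`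
constant is the same as a relation `f + μ = g ^ 2`, by dividing `norm v` by `v.im ^ 2`.
-/

open Polynomial QuadraticAlgebra

theorem span_isUnit_eq_top_congr {A B C : Type*} [CommSemiring A] [Semiring B] [Semiring C]
    [Algebra A B] [Algebra A C] (e : B ≃ₐ[A] C) :
    Submodule.span A {u : B | IsUnit u} = ⊤ ↔ Submodule.span A {u : C | IsUnit u} = ⊤ := by
  have image_units : e.toLinearEquiv '' {u : B | IsUnit u} = {u : C | IsUnit u} := by
    ext u
    exact ⟨by rintro ⟨v, hv, rfl⟩; exact hv.map e, fun hu ↦ ⟨e.symm u, hu.map e.symm, by simp⟩⟩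
  rw [← image_units, ← LinearEquiv.coe_coe, Submodule.span_image, Submodule.map_eq_top_iff]

section QuadraticAlgebra

variable {A : Type*} [CommRing A]

/-- The isomorphism of `A[Y]/(Y² - d)` with the algebra of formal sums `re + im * ω`, `ω² = d`,
that sends the class of `Y` to `ω`. It makes coordinates, conjugation and the norm available. -/
noncomputable def adjoinRootEquivQuadraticAlgebra (d : A) :
    AdjoinRoot (X ^ 2 - C d) ≃ₐ[A] QuadraticAlgebra A d 0 :=
  AlgEquiv.ofAlgHom
    (AdjoinRoot.liftAlgHom _ (Algebra.ofId A _) omega (by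
      simp only [eval₂_sub, eval₂_X_pow, eval₂_C, AlgHom.coe_toRingHom]
      rw [sq, omega_mul_omega_eq_algebraMap]
      simp))
    (lift ⟨AdjoinRoot.root _, by
      have root_sq : AdjoinRoot.mk (X ^ 2 - C d) (X ^ 2 - C d) = 0 := AdjoinRoot.mk_self
      rw [map_sub, map_pow, AdjoinRoot.mk_X, AdjoinRoot.mk_C, sub_eq_zero] at root_sq
      rw [← sq, root_sq, zero_smul, add_zero, Algebra.smul_def, mul_one,
        AdjoinRoot.algebraMap_eq]⟩)
    (by ext <;> simp)
    (by ext; simp)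

variable {a b : A}

theorem span_isUnit_eq_top_iff_span_im :
    Submodule.span A {u : QuadraticAlgebra A a b | IsUnit u} = ⊤ ↔
      Ideal.span (im '' {u : QuadraticAlgebra A a b | IsUnit u}) = ⊤ := by
  set U := {u : QuadraticAlgebra A a b | IsUnit u}
  have map_im : (Submodule.span A U).map (imₗ a b) = Ideal.span (im '' U) :=
    Submodule.map_span _ _
  rw [← map_im]
  constructor
  · intro h
    rw [h, Submodule.map_top, LinearMap.range_eq_top]
    exact fun c ↦ ⟨⟨0, c⟩, rfl⟩
  · intro h
    rw [eq_top_iff]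
    rintro w -
    obtain ⟨z, hz, hzw : z.im = w.im⟩ := h.ge (Submodule.mem_top (x := w.im))
    have w_eq : w = z + (w.re - z.re) • 1 := by ext <;> simp [hzw]
    rw [w_eq]
    exact add_mem hz (Submodule.smul_mem _ _ (Submodule.subset_span isUnit_one))

theorem span_isUnit_eq_top_iff_isUnit_im {v : QuadraticAlgebra A a b} (hv : IsUnit v)
    (hdvd : ∀ u : QuadraticAlgebra A a b, IsUnit u → v.im ∣ u.im) :
    Submodule.span A {u : QuadraticAlgebra A a b | IsUnit u} = ⊤ ↔ IsUnit v.im := by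
  rw [span_isUnit_eq_top_iff_span_im, ← Ideal.span_singleton_eq_top]
  suffices span_im : Ideal.span (im '' {u : QuadraticAlgebra A a b | IsUnit u}) =
      Ideal.span {v.im} by rw [span_im]
  apply le_antisymm
  · rw [Ideal.span_le]
    rintro _ ⟨u, hu, rfl⟩
    exact Ideal.mem_span_singleton.mpr (hdvd u hu)
  · exact Ideal.span_mono (Set.singleton_subset_iff.mpr ⟨v, hv, rfl⟩)

theorem isCoprime_im_re_of_isUnit {v : QuadraticAlgebra A a b} (hv : IsUnit v) :
    IsCoprime v.im v.re := by
  obtain ⟨c, hc⟩ := (isUnit_iff_norm_isUnit.mp hv).exists_left_inv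
  rw [norm_def] at hc
  exact ⟨-(c * a * v.im), c * (v.re + b * v.im), by linear_combination hc⟩

theorem im_dvd_im_mul_iff {u v : QuadraticAlgebra A a b} (hv : IsUnit v) :
    v.im ∣ (u * v).im ↔ v.im ∣ u.im := by
  have im_mul_eq : (u * v).im = u.im * v.re + v.im * (u.re + b * u.im) := by
    rw [im_mul]; ring
  rw [im_mul_eq, dvd_add_left (dvd_mul_right _ _)]
  exact ⟨(isCoprime_im_re_of_isUnit hv).dvd_of_dvd_mul_right, fun h ↦ h.mul_right _⟩

variable {d : A}

theorem norm_eq_re_sq_sub_mul_im_sq (v : QuadraticAlgebra A d 0) :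
    v.norm = v.re ^ 2 - d * v.im ^ 2 := by
  rw [norm_def]; ring

theorem im_mul_mul_im_star_mul (u v : QuadraticAlgebra A d 0) :
    (u * v).im * (star u * v).im = u.norm * v.im ^ 2 - v.norm * u.im ^ 2 := by
  simp only [norm_eq_re_sq_sub_mul_im_sq, im_mul, re_star, im_star]
  ring

theorem im_mul_sub_im_star_mul (u v : QuadraticAlgebra A d 0) :
    (u * v).im - (star u * v).im = 2 * (u.im * v.re) := by
  simp only [im_mul, re_star, im_star]
  ring

theorem exists_isUnit_and_isUnit_im_iff :
    (∃ v : QuadraticAlgebra A d 0, IsUnit v ∧ IsUnit v.im) ↔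
      ∃ m : A, IsUnit m ∧ IsSquare (d + m) := by
  simp only [isUnit_iff_norm_isUnit, norm_eq_re_sq_sub_mul_im_sq]
  constructor
  · rintro ⟨v, hv, him⟩
    obtain ⟨c, hc⟩ := him.exists_left_inv
    refine ⟨c ^ 2 * (v.re ^ 2 - d * v.im ^ 2), ((IsUnit.of_mul_eq_one _ hc).pow 2).mul hv,
      c * v.re, ?_⟩
    linear_combination -d * (c * v.im + 1) * hc
  · rintro ⟨m, hm, g, hg⟩
    refine ⟨⟨g, 1⟩, ?_, isUnit_one⟩
    rwa [show g ^ 2 - d * 1 ^ 2 = m by linear_combination -hg]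

end QuadraticAlgebra

section Descent

variable {D : Type*} [CommRing D] [IsDomain D] {f : D[X]}

theorem natDegree_norm_of_isUnit {v : QuadraticAlgebra D[X] f 0} (hv : IsUnit v) :
    v.norm.natDegree = 0 :=
  natDegree_eq_zero_of_isUnit (isUnit_iff_norm_isUnit.mp hv)

theorem natDegree_re_pos_of_isUnit (hf : 0 < f.natDegree) {v : QuadraticAlgebra D[X] f 0}
    (hv : IsUnit v) (him : v.im ≠ 0) : 0 < v.re.natDegree := by
  have hf0 : f ≠ 0 := ne_zero_of_natDegree_gt hf
  have re_sq : v.re ^ 2 = f * v.im ^ 2 + C (v.norm.coeff 0) := by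
    rw [← eq_C_of_natDegree_eq_zero (natDegree_norm_of_isUnit hv), norm_eq_re_sq_sub_mul_im_sq]
    ring
  have := congrArg natDegree re_sq
  rw [natDegree_add_C, natDegree_mul hf0 (pow_ne_zero 2 him), natDegree_pow, natDegree_pow] at this
  omega

theorem exists_degree_im_mul_lt (h2 : (2 : D) ≠ 0) (hf : 0 < f.natDegree)
    {u v : QuadraticAlgebra D[X] f 0} (hu : IsUnit u) (hv : IsUnit v) (him : v.im ≠ 0)
    (hle : v.im.degree ≤ u.im.degree) :
    (u * v).im.degree < u.im.degree ∨ (star u * v).im.degree < u.im.degree := by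
  by_contra! ⟨hmul, hstar⟩
  have hu0 : u.im ≠ 0 := by rintro h; simp [h, him] at hle
  have hre := natDegree_re_pos_of_isUnit hf hv him
  have hmul0 : (u * v).im ≠ 0 := by rintro h; simp [h, hu0] at hmul
  have hstar0 : (star u * v).im ≠ 0 := by rintro h; simp [h, hu0] at hstar
  have natDegree_norm_mul {w z : QuadraticAlgebra D[X] f 0} (hw : IsUnit w) :
      (w.norm * z.im ^ 2).natDegree ≤ 2 * z.im.natDegree := by
    have := natDegree_mul_le (p := w.norm) (q := z.im ^ 2)
    rwa [natDegree_norm_of_isUnit hw, zero_add, natDegree_pow] at this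
  have sum_le : (u * v).im.natDegree + (star u * v).im.natDegree ≤ 2 * u.im.natDegree := by
    rw [← natDegree_mul hmul0 hstar0, im_mul_mul_im_star_mul]
    refine (natDegree_sub_le _ _).trans (max_le ?_ (natDegree_norm_mul hv))
    exact (natDegree_norm_mul hu).trans (Nat.mul_le_mul_left 2 (natDegree_le_natDegree hle))
  have le_max : u.im.natDegree + v.re.natDegree ≤
      max (u * v).im.natDegree (star u * v).im.natDegree := by
    have := natDegree_sub_le (u * v).im (star u * v).im
    rwa [im_mul_sub_im_star_mul, ← Polynomial.C_ofNat, natDegree_C_mul h2,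
      natDegree_mul hu0 (ne_zero_of_natDegree_gt hre)] at this
  have := natDegree_le_natDegree hmul
  have := natDegree_le_natDegree hstar
  omega

theorem im_dvd_im_of_minimal (h2 : (2 : D) ≠ 0) (hf : 0 < f.natDegree)
    {v : QuadraticAlgebra D[X] f 0} (hv : IsUnit v) (him : v.im ≠ 0)
    (hmin : ∀ u : QuadraticAlgebra D[X] f 0, IsUnit u → u.im ≠ 0 → v.im.degree ≤ u.im.degree)
    (u : QuadraticAlgebra D[X] f 0) (hu : IsUnit u) : v.im ∣ u.im := by
  induction hn : u.im.degree using WellFoundedLT.induction generalizing u with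
  | ind n ih =>
  subst hn
  by_cases hu0 : u.im = 0
  · exact hu0.symm ▸ dvd_zero v.im
  rcases exists_degree_im_mul_lt h2 hf hu hv him (hmin u hu hu0) with hlt | hlt
  · exact (im_dvd_im_mul_iff hv).mp (ih _ hlt _ (hu.mul hv) rfl)
  · have := (im_dvd_im_mul_iff hv).mp (ih _ hlt _ (hu.star.mul hv) rfl)
    rwa [im_star, dvd_neg] at this

end Descent

section Field

variable {K : Type*} [Field K] {f : K[X]}

theorem exists_isUnit_isSquare_add_of_natDegree_eq_zero (hf : f.natDegree = 0) :
    ∃ m : K[X], IsUnit m ∧ IsSquare (f + m) := by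
  by_cases hf0 : f = 0
  · exact ⟨1, isUnit_one, 1, by simp [hf0]⟩
  · have hunit : IsUnit f := isUnit_iff_degree_eq_zero.mpr
      ((degree_eq_iff_natDegree_eq hf0).mpr hf)
    exact ⟨-f, hunit.neg, 0, by simp⟩

-- Dividing `v.re` by `v.im` with quotient `t` and remainder `r`, the norm equation becomes
-- `v.im ^ 2 * (t ^ 2 - f) = norm v - r ^ 2`, whose right-hand side has degree less than `v.im ^ 2`.
theorem exists_isUnit_isSquare_add_of_charP_two [CharP K 2] {v : QuadraticAlgebra K[X] f 0}
    (hv : IsUnit v) (him : v.im ≠ 0) : ∃ m : K[X], IsUnit m ∧ IsSquare (f + m) := by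
  by_cases him_unit : IsUnit v.im
  · exact exists_isUnit_and_isUnit_im_iff.mp ⟨v, hv, him_unit⟩
  have two_eq_zero : (2 : K[X]) = 0 := CharTwo.two_eq_zero
  have him_pos : 0 < v.im.natDegree :=
    natDegree_pos_iff_degree_pos.mpr (degree_pos_of_ne_zero_of_nonunit him him_unit)
  set t := v.re / v.im
  set r := v.re % v.im
  have re_eq : v.im * t + r = v.re := EuclideanDomain.div_add_mod _ _
  have norm_eq : v.im ^ 2 * (t ^ 2 - f) = v.norm - r ^ 2 := by
    rw [norm_eq_re_sq_sub_mul_im_sq, ← re_eq]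
    linear_combination -(v.im * t * r) * two_eq_zero
  have norm_natDegree : v.norm.natDegree = 0 := natDegree_norm_of_isUnit hv
  have r_natDegree_lt : r.natDegree < v.im.natDegree := natDegree_mod_lt _ him_pos.ne'
  have natDegree_lt : (v.norm - r ^ 2).natDegree < (v.im ^ 2).natDegree := by
    have := natDegree_sub_le v.norm (r ^ 2)
    rw [natDegree_pow] at this ⊢
    omega
  have f_eq : t ^ 2 - f = 0 := by
    have rhs_eq_zero := eq_zero_of_dvd_of_natDegree_lt (Dvd.intro _ norm_eq) natDegree_lt
    exact (mul_eq_zero.mp (norm_eq.trans rhs_eq_zero)).resolve_left (pow_ne_zero 2 him)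
  exact ⟨1, isUnit_one, t + 1, by linear_combination -f_eq - t * two_eq_zero⟩

theorem exists_isUnit_forall_im_dvd_im (f : K[X]) :
    ∃ v : QuadraticAlgebra K[X] f 0, IsUnit v ∧
      ∀ u : QuadraticAlgebra K[X] f 0, IsUnit u → v.im ∣ u.im := by
  by_cases hsq : ∃ m : K[X], IsUnit m ∧ IsSquare (f + m)
  · obtain ⟨v, hv, him⟩ := exists_isUnit_and_isUnit_im_iff.mpr hsq
    exact ⟨v, hv, fun u _ ↦ him.dvd⟩
  by_cases hne : ∃ u : QuadraticAlgebra K[X] f 0, IsUnit u ∧ u.im ≠ 0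
  · obtain ⟨v, ⟨hv, him⟩, hmin⟩ := exists_minimalFor_of_wellFoundedLT _ (fun u ↦ u.im.degree) hne
    have hf : 0 < f.natDegree :=
      Nat.pos_of_ne_zero fun h ↦ hsq (exists_isUnit_isSquare_add_of_natDegree_eq_zero h)
    have h2 : (2 : K) ≠ 0 := fun h ↦
      have : CharP K 2 := CharTwo.of_one_ne_zero_of_two_eq_zero one_ne_zero h
      hsq (exists_isUnit_isSquare_add_of_charP_two hv him)
    refine ⟨v, hv, im_dvd_im_of_minimal h2 hf hv him fun u hu hu0 ↦ ?_⟩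
    exact (le_total _ _).elim id (hmin ⟨hu, hu0⟩)
  · push Not at hne
    exact ⟨1, isUnit_one, fun u hu ↦ (hne u hu).symm ▸ dvd_zero _⟩

theorem generated_by_units_iff_f_plus_const_square_general
    (K : Type*) [Field K] (f : K[X]) :
    Submodule.span K[X] {u : AdjoinRoot ((X : K[X][X]) ^ 2 - C f) | IsUnit u} = ⊤ ↔
      ∃ μ : K, μ ≠ 0 ∧ ∃ g : K[X], f + C μ = g ^ 2 := by
  obtain ⟨v, hv, hdvd⟩ := exists_isUnit_forall_im_dvd_im f
  have isUnit_im_iff : IsUnit v.im ↔ ∃ w : QuadraticAlgebra K[X] f 0, IsUnit w ∧ IsUnit w.im :=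
    ⟨fun h ↦ ⟨v, hv, h⟩, fun ⟨w, hw, h⟩ ↦ isUnit_of_dvd_unit (hdvd w hw) h⟩
  rw [span_isUnit_eq_top_congr (adjoinRootEquivQuadraticAlgebra f),
    span_isUnit_eq_top_iff_isUnit_im hv hdvd, isUnit_im_iff, exists_isUnit_and_isUnit_im_iff]
  constructor
  · rintro ⟨m, hm, hsq⟩
    obtain ⟨μ, hμ, rfl⟩ := Polynomial.isUnit_iff.mp hm
    exact ⟨μ, hμ.ne_zero, hsq.exists_sq⟩
  · rintro ⟨μ, hμ, hsq⟩
    exact ⟨C μ, isUnit_C.mpr hμ.isUnit, (isSquare_iff_exists_sq _).mpr hsq⟩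

end Field

/-- For a finite field `K` of odd characteristic and a nonconstant squarefree `f ∈ K[X]`,
the ring `R = K[X,Y]/(Y² - f(X))` is generated by its units as a `K[x]`-module if and
only if `f + μ` is a square in `K[X]` for some nonzero constant `μ`. -/
theorem generated_by_units_iff_f_plus_const_square
    (K : Type*) [Field K] [Finite K] (hodd : Odd (ringChar K))
    (f : Polynomial K) (hf : 0 < f.natDegree) (hsf : Squarefree f) :
    Submodule.span (Polynomial K)
        {u : AdjoinRoot ((Polynomial.X : Polynomial (Polynomial K)) ^ 2 - Polynomial.C f) |
          IsUnit u} = ⊤ ↔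
      ∃ μ : K, μ ≠ 0 ∧ ∃ g : Polynomial K, f + Polynomial.C μ = g ^ 2 :=
  generated_by_units_iff_f_plus_const_square_general K f
end

section
/- Let K be a finite field of odd characteristic and f ∈ K[X] a nonconstant squarefree (separable) polynomial. Let R := K[x][y] = K[X,Y]/(Y² − f(X)), regarded as a module over K[x], and suppose R is generated by its units as a K[x]-module. Then there exists a polynomial a ∈ K[X] such that a(x) + y is a unit of R and every unit of R has the form λ·(a(x) + y)^n for some nonzero λ ∈ K and some integer n (where negative powers are taken in the unit group of R). -/
/-!
A unit `u = p + q y` of `R` has norm `p² - f q² ∈ Kˣ`. Among the units with `q ≠ 0` choose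
`ε = a + b y` with `deg a` minimal. If `u` is another such unit, the `K[x]`-coordinates of `u ε` and
of `u ε̄`, where `ε̄ = a - b y`, have sum `2 p a`, of degree `deg p + deg a > deg p`, and product of
degree at most `2 deg p`, because both norms are constant. So one of them has degree less than
`deg p`. As `ε̄` is a constant multiple of `ε⁻¹`, descent shows that `u` is a constant times a power
of `ε`. All units therefore lie in the order `K[x] + b R`; since they span `R`, `b` is a constant,
and `ε` can be rescaled to `b = 1`.
-/

open Polynomial QuadraticAlgebra

section FundamentalUnit

variable {K A B : Type*} [CommSemiring K] [CommSemiring A] [CommSemiring B] [Algebra K A]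
  [Algebra K B]

variable (K) in
/-- `ε` is a fundamental unit of the `K`-algebra `A`: it generates `Aˣ` modulo the image of `Kˣ`.
It may have finite order modulo that image. -/
def IsFundamentalUnit (ε : Aˣ) : Prop :=
  ∀ u : Aˣ, ∃ (l : Kˣ) (n : ℤ), u = Units.map (algebraMap K A) l * ε ^ n

theorem IsFundamentalUnit.map_algebraMap_mul {ε : Aˣ} (hε : IsFundamentalUnit K ε) (c : Kˣ) :
    IsFundamentalUnit K (Units.map (algebraMap K A) c * ε) := by
  intro u
  obtain ⟨l, n, rfl⟩ := hε u
  refine ⟨l * (c ^ n)⁻¹, n, ?_⟩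
  rw [map_mul, map_inv, map_zpow, mul_zpow, mul_assoc, inv_mul_cancel_left]

theorem IsFundamentalUnit.map_algEquiv {ε : Aˣ} (hε : IsFundamentalUnit K ε) (e : A ≃ₐ[K] B) :
    IsFundamentalUnit K (Units.mapEquiv (e : A ≃* B) ε) := by
  intro u
  obtain ⟨l, n, h⟩ := hε ((Units.mapEquiv (e : A ≃* B)).symm u)
  have hl : Units.mapEquiv (e : A ≃* B) (Units.map (algebraMap K A) l) =
      Units.map (algebraMap K B) l := Units.ext (e.commutes l)
  exact ⟨l, n, by rw [← hl, ← map_zpow, ← map_mul, ← h, MulEquiv.apply_symm_apply]⟩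

theorem span_isUnit_eq_top_of_algEquiv (e : A ≃ₐ[K] B)
    (h : Submodule.span K {u : A | IsUnit u} = ⊤) :
    Submodule.span K {u : B | IsUnit u} = ⊤ := by
  have himage : e.toLinearMap '' {u : A | IsUnit u} = {u : B | IsUnit u} := by
    ext u
    exact ⟨fun ⟨v, hv, hvu⟩ ↦ hvu ▸ IsUnit.map e hv,
      fun hu ↦ ⟨e.symm u, IsUnit.map e.symm hu, e.apply_symm_apply u⟩⟩
  rw [← himage, Submodule.span_image, h, Submodule.map_top, LinearMap.range_eq_top]
  exact e.surjective

end FundamentalUnit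

section QuadraticUnits

variable {R : Type*} [CommRing R] {a b : R}

theorem val_inv_eq_smul_star (u : (QuadraticAlgebra R a b)ˣ) :
    u⁻¹.val = (Units.map norm u)⁻¹.val • star u.val := by
  refine Units.inv_eq_of_mul_eq_one_right ?_
  rw [mul_smul_comm, ← algebraMap_norm_eq_mul_star, Algebra.smul_def, ← map_mul,
    ← Units.coe_map norm, Units.inv_mul, map_one]

theorem isUnit_re_of_im_eq_zero {z : QuadraticAlgebra R a b} (hz : IsUnit z) (him : z.im = 0) :
    IsUnit z.re := by
  have hnorm : z.norm = z.re * z.re := by simp [norm_def, him]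
  exact isUnit_of_mul_isUnit_left (hnorm ▸ isUnit_iff_norm_isUnit.mp hz)

/-- The order `R + d O` of conductor `d` in the quadratic algebra `O = R ⊕ R ω`, encoded as the
elements whose `ω`-coordinate is divisible by `d`. -/
def conductorOrder (a b d : R) : Subalgebra R (QuadraticAlgebra R a b) where
  carrier := {z | d ∣ z.im}
  mul_mem' {z w} hz hw := by
    rw [Set.mem_ofPred_eq, im_mul]
    exact dvd_add (dvd_add (hw.mul_left _) (hz.mul_right _)) (hw.mul_left _)
  add_mem' := dvd_add
  algebraMap_mem' _ := dvd_zero d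

theorem mem_conductorOrder {d : R} {z : QuadraticAlgebra R a b} :
    z ∈ conductorOrder a b d ↔ d ∣ z.im :=
  Iff.rfl

theorem conductorOrder_eq_top_iff {d : R} : conductorOrder a b d = ⊤ ↔ IsUnit d := by
  refine ⟨fun h ↦ isUnit_of_dvd_one ?_, fun h ↦ eq_top_iff.mpr fun z _ ↦ h.dvd⟩
  have hω : (ω : QuadraticAlgebra R a b) ∈ conductorOrder a b d := h ▸ Algebra.mem_top
  rwa [mem_conductorOrder, omega_im] at hω

theorem mem_units_conductorOrder_iff {d : R} {u : (QuadraticAlgebra R a b)ˣ} :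
    u ∈ (conductorOrder a b d).toSubmonoid.units ↔ d ∣ u.val.im := by
  refine ⟨fun h ↦ h.1, fun h ↦ ⟨h, ?_⟩⟩
  have hstar : star u.val ∈ conductorOrder a b d := (dvd_neg (α := R)).mpr h
  have hinv : u⁻¹.val ∈ conductorOrder a b d :=
    val_inv_eq_smul_star u ▸ Subalgebra.smul_mem _ hstar _
  exact hinv

theorem isUnit_of_forall_dvd_im {d : R}
    (hspan : Submodule.span R {u : QuadraticAlgebra R a b | IsUnit u} = ⊤)
    (hd : ∀ u : (QuadraticAlgebra R a b)ˣ, d ∣ u.val.im) : IsUnit d := by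
  rw [← conductorOrder_eq_top_iff (a := a) (b := b), ← Algebra.toSubmodule_eq_top, eq_top_iff,
    ← hspan, Submodule.span_le]
  rintro _ ⟨u, rfl⟩
  exact hd u

theorem exists_unit_im_ne_zero [Nontrivial R]
    (hspan : Submodule.span R {u : QuadraticAlgebra R a b | IsUnit u} = ⊤) :
    ∃ u : (QuadraticAlgebra R a b)ˣ, u.val.im ≠ 0 := by
  by_contra! h
  exact not_isUnit_zero (isUnit_of_forall_dvd_im hspan fun u ↦ zero_dvd_iff.mpr (h u))

theorem IsFundamentalUnit.isUnit_im {K : Type*} [CommSemiring K] [Algebra K R]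
    {ε : (QuadraticAlgebra R a b)ˣ} (hε : IsFundamentalUnit K ε)
    (hspan : Submodule.span R {u : QuadraticAlgebra R a b | IsUnit u} = ⊤) :
    IsUnit ε.val.im := by
  refine isUnit_of_forall_dvd_im hspan fun u ↦ ?_
  obtain ⟨l, n, rfl⟩ := hε u
  rw [← mem_units_conductorOrder_iff]
  refine mul_mem (mem_units_conductorOrder_iff.mpr ?_)
    (zpow_mem (mem_units_conductorOrder_iff.mpr dvd_rfl) n)
  exact dvd_zero _

end QuadraticUnits

section SquareRoot

variable {R : Type*} [CommRing R]

theorem adjoinRoot_root_mul_self (a : R) :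
    AdjoinRoot.root (X ^ 2 - C a) * AdjoinRoot.root (X ^ 2 - C a) =
      a • 1 + (0 : R) • AdjoinRoot.root (X ^ 2 - C a) := by
  have h := AdjoinRoot.eval₂_root (X ^ 2 - C a)
  rw [eval₂_sub, eval₂_X_pow, eval₂_C, sub_eq_zero] at h
  rw [← sq, h, zero_smul, add_zero, ← Algebra.algebraMap_eq_smul_one, AdjoinRoot.algebraMap_eq]

/-- The identification of `R[Y] / (Y² - a)` with the quadratic algebra on the basis `1, ω` with
`ω² = a`. -/
noncomputable def adjoinRootSqSubCEquiv (a : R) :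
    AdjoinRoot (X ^ 2 - C a) ≃ₐ[R] QuadraticAlgebra R a 0 :=
  AlgEquiv.ofAlgHom
    (AdjoinRoot.liftAlgHom _ (Algebra.ofId R _) ω
      (by simp [sq, omega_mul_omega_eq_algebraMap]))
    (QuadraticAlgebra.lift ⟨AdjoinRoot.root _, adjoinRoot_root_mul_self a⟩)
    (by ext <;> simp) (by ext; simp)

theorem adjoinRootSqSubCEquiv_symm_apply (a : R) (z : QuadraticAlgebra R a 0) :
    (adjoinRootSqSubCEquiv a).symm z =
      AdjoinRoot.of _ z.re + AdjoinRoot.of _ z.im * AdjoinRoot.root _ := by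
  simp [adjoinRootSqSubCEquiv, Algebra.smul_def]

theorem re_mul_add_re_mul_star {a : R} (z w : QuadraticAlgebra R a 0) :
    (z * w).re + (z * star w).re = 2 * (z.re * w.re) := by
  simp only [re_mul, re_star, im_star]
  ring

theorem re_mul_mul_re_mul_star {a : R} (z w : QuadraticAlgebra R a 0) :
    (z * w).re * (z * star w).re =
      w.norm * z.re ^ 2 + z.norm * w.re ^ 2 - z.norm * w.norm := by
  simp only [re_mul, re_star, im_star, norm_def]
  ring

end SquareRoot

section PolynomialBase

variable {K : Type*} [CommRing K] [IsDomain K] {f : K[X]}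

theorem natDegree_unit_mul (c : K[X]ˣ) (p : K[X]) : (c * p).natDegree = p.natDegree := by
  obtain ⟨r, hr, hrc⟩ := Polynomial.isUnit_iff.mp c.isUnit
  rw [← hrc, natDegree_C_mul hr.ne_zero]

theorem natDegree_lt_or_lt_of_mul_le_of_lt_add {p q : K[X]} {m : ℕ} (hm : 0 < m)
    (hmul : (p * q).natDegree ≤ 2 * m) (hadd : m < (p + q).natDegree) :
    p.natDegree < m ∨ q.natDegree < m := by
  by_contra! h
  have hp : p ≠ 0 := ne_zero_of_natDegree_gt (hm.trans_le h.1)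
  have hq : q ≠ 0 := ne_zero_of_natDegree_gt (hm.trans_le h.2)
  rw [natDegree_mul hp hq] at hmul
  have hmax := hadd.trans_le (natDegree_add_le p q)
  rcases lt_max_iff.mp hmax with hlt | hlt <;> omega

theorem natDegree_norm_eq_zero {z : QuadraticAlgebra K[X] f 0} (hz : IsUnit z) :
    z.norm.natDegree = 0 :=
  natDegree_eq_zero_of_isUnit (isUnit_iff_norm_isUnit.mp hz)

theorem natDegree_re_pos (hf : 0 < f.natDegree) {z : QuadraticAlgebra K[X] f 0}
    (hz : IsUnit z) (him : z.im ≠ 0) : 0 < z.re.natDegree := by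
  have hre : z.re ^ 2 = f * z.im ^ 2 + z.norm := by
    rw [norm_def]
    ring
  have hdeg : 0 < (f * z.im ^ 2).natDegree := by
    rw [natDegree_mul (ne_zero_of_natDegree_gt hf) (pow_ne_zero 2 him)]
    omega
  have hsq : (z.re ^ 2).natDegree = (f * z.im ^ 2).natDegree := by
    rw [hre, natDegree_add_eq_left_of_natDegree_lt (natDegree_norm_eq_zero hz ▸ hdeg)]
  rw [natDegree_pow] at hsq
  omega

theorem natDegree_re_mul_mul_re_mul_star_le {z w : QuadraticAlgebra K[X] f 0} (hz : IsUnit z)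
    (hw : IsUnit w) (hle : w.re.natDegree ≤ z.re.natDegree) :
    ((z * w).re * (z * star w).re).natDegree ≤ 2 * z.re.natDegree := by
  rw [re_mul_mul_re_mul_star]
  have h1 : (w.norm * z.re ^ 2).natDegree ≤ 2 * z.re.natDegree := by
    grw [natDegree_mul_le, natDegree_norm_eq_zero hw, natDegree_pow, zero_add]
  have h2 : (z.norm * w.re ^ 2).natDegree ≤ 2 * z.re.natDegree := by
    grw [natDegree_mul_le, natDegree_norm_eq_zero hz, natDegree_pow, zero_add, hle]
  have h3 : (z.norm * w.norm).natDegree ≤ 2 * z.re.natDegree := by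
    grw [natDegree_mul_le, natDegree_norm_eq_zero hz, natDegree_norm_eq_zero hw]
    exact Nat.zero_le _
  exact (natDegree_sub_le_of_le (natDegree_add_le_of_degree_le h1 h2) h3).trans (max_self _).le

theorem natDegree_re_mul_lt_or_re_mul_inv_lt (h2 : (2 : K) ≠ 0)
    {u v : (QuadraticAlgebra K[X] f 0)ˣ}
    (hpos : 0 < v.val.re.natDegree) (hle : v.val.re.natDegree ≤ u.val.re.natDegree) :
    (u * v).val.re.natDegree < u.val.re.natDegree ∨
      (u * v⁻¹).val.re.natDegree < u.val.re.natDegree := by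
  have hinv : (u * v⁻¹).val.re.natDegree = (u.val * star v.val).re.natDegree := by
    rw [Units.val_mul, val_inv_eq_smul_star, mul_smul_comm, re_smul, smul_eq_mul,
      natDegree_unit_mul]
  have hsum : (u.val * v.val).re + (u.val * star v.val).re = C 2 * (u.val.re * v.val.re) := by
    rw [re_mul_add_re_mul_star, Polynomial.C_ofNat]
  rw [hinv, Units.val_mul]
  refine natDegree_lt_or_lt_of_mul_le_of_lt_add (hpos.trans_le hle)
    (natDegree_re_mul_mul_re_mul_star_le u.isUnit v.isUnit hle) ?_
  rw [hsum, natDegree_C_mul h2, natDegree_mul (ne_zero_of_natDegree_gt (hpos.trans_le hle))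
    (ne_zero_of_natDegree_gt hpos)]
  omega

theorem isFundamentalUnit_of_minimalFor (h2 : (2 : K) ≠ 0) (hf : 0 < f.natDegree)
    {ε : (QuadraticAlgebra K[X] f 0)ˣ}
    (hε : MinimalFor (fun u : (QuadraticAlgebra K[X] f 0)ˣ ↦ u.val.im ≠ 0)
      (fun u ↦ u.val.re.natDegree) ε) : IsFundamentalUnit K ε := by
  intro u
  induction hn : u.val.re.natDegree using Nat.strong_induction_on generalizing u with
  | _ n ih =>
  subst hn
  by_cases him : u.val.im = 0
  · obtain ⟨r, hr, hru⟩ := Polynomial.isUnit_iff.mp (isUnit_re_of_im_eq_zero u.isUnit him)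
    refine ⟨hr.unit, 0, ?_⟩
    rw [zpow_zero, mul_one]
    exact Units.ext (QuadraticAlgebra.ext hru.symm him)
  · have hpos := natDegree_re_pos hf ε.isUnit hε.prop
    rcases natDegree_re_mul_lt_or_re_mul_inv_lt h2 hpos (hε.le him) with hlt | hlt
    · obtain ⟨l, n, h⟩ := ih _ hlt _ rfl
      exact ⟨l, n - 1, by rw [zpow_sub_one, ← mul_assoc, ← h, mul_inv_cancel_right]⟩
    · obtain ⟨l, n, h⟩ := ih _ hlt _ rfl
      exact ⟨l, n + 1, by rw [zpow_add_one, ← mul_assoc, ← h, inv_mul_cancel_right]⟩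

theorem exists_isFundamentalUnit_im_eq_one (h2 : (2 : K) ≠ 0) (hf : 0 < f.natDegree)
    (hspan : Submodule.span K[X] {u : QuadraticAlgebra K[X] f 0 | IsUnit u} = ⊤) :
    ∃ ε : (QuadraticAlgebra K[X] f 0)ˣ, ε.val.im = 1 ∧ IsFundamentalUnit K ε := by
  obtain ⟨ε, hmin⟩ := exists_minimalFor_of_wellFoundedLT _
    (fun u : (QuadraticAlgebra K[X] f 0)ˣ ↦ u.val.re.natDegree) (exists_unit_im_ne_zero hspan)
  have hε := isFundamentalUnit_of_minimalFor h2 hf hmin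
  obtain ⟨_, ⟨β, rfl⟩, hβ⟩ := Polynomial.isUnit_iff.mp (hε.isUnit_im hspan)
  refine ⟨_, ?_, hε.map_algebraMap_mul β⁻¹⟩
  have hsmul : (Units.map (algebraMap K (QuadraticAlgebra K[X] f 0)) β⁻¹ * ε).val =
      β⁻¹.val • ε.val := (Algebra.smul_def _ _).symm
  rw [hsmul, im_smul, ← hβ, Polynomial.smul_C, smul_eq_mul, Units.inv_mul, C_1]

end PolynomialBase

theorem fundamental_unit_odd_char_general {K : Type*} [CommRing K] [IsDomain K] (h2 : (2 : K) ≠ 0)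
    {f : K[X]} (hf : 0 < f.natDegree)
    (hgen : Submodule.span K[X] {u : AdjoinRoot (X ^ 2 - C f) | IsUnit u} = ⊤) :
    ∃ (a : K[X]) (ε : (AdjoinRoot (X ^ 2 - C f))ˣ),
      ε.val = AdjoinRoot.of _ a + AdjoinRoot.root _ ∧ IsFundamentalUnit K ε := by
  obtain ⟨ε, him, hε⟩ := exists_isFundamentalUnit_im_eq_one h2 hf
    (span_isUnit_eq_top_of_algEquiv (adjoinRootSqSubCEquiv f) hgen)
  refine ⟨ε.val.re, _, ?_, hε.map_algEquiv ((adjoinRootSqSubCEquiv f).symm.restrictScalars K)⟩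
  refine (adjoinRootSqSubCEquiv_symm_apply f ε.val).trans ?_
  rw [him, map_one, one_mul]

/-- If the ring `R = K[X,Y]/(Y² - f(X))` (with `K` a finite field of odd characteristic and
`f` nonconstant squarefree) is generated by its units as a `K[x]`-module, then it has a
fundamental unit of the form `a(x) + y`: every unit of `R` is `λ·(a(x) + y)^n` with
`λ ∈ K*` and `n ∈ ℤ`. -/
theorem fundamental_unit_odd_char
    (K : Type*) [Field K] [Finite K] (hodd : Odd (ringChar K))
    (f : Polynomial K) (hf : 0 < f.natDegree) (hsf : Squarefree f)
    (hgen : Submodule.span (Polynomial K)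
      {u : AdjoinRoot ((Polynomial.X : Polynomial (Polynomial K)) ^ 2 - Polynomial.C f) |
        IsUnit u} = ⊤) :
    ∃ (a : Polynomial K)
      (ε : (AdjoinRoot ((Polynomial.X : Polynomial (Polynomial K)) ^ 2 - Polynomial.C f))ˣ),
      (ε : AdjoinRoot ((Polynomial.X : Polynomial (Polynomial K)) ^ 2 - Polynomial.C f)) =
          AdjoinRoot.of _ a + AdjoinRoot.root _ ∧
      ∀ u : (AdjoinRoot ((Polynomial.X : Polynomial (Polynomial K)) ^ 2 - Polynomial.C f))ˣ,
        ∃ (l : K) (n : ℤ), l ≠ 0 ∧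
          (u : AdjoinRoot ((Polynomial.X : Polynomial (Polynomial K)) ^ 2 - Polynomial.C f)) =
            AdjoinRoot.of _ (Polynomial.C l) * ((ε ^ n :
              (AdjoinRoot ((Polynomial.X : Polynomial (Polynomial K)) ^ 2 -
                Polynomial.C f))ˣ) :
              AdjoinRoot ((Polynomial.X : Polynomial (Polynomial K)) ^ 2 - Polynomial.C f)) := by
  obtain ⟨a, ε, hε, hfund⟩ := fundamental_unit_odd_char_general
    (Ring.two_ne_zero fun h ↦ absurd (h ▸ hodd) (by decide)) hf hgen
  exact ⟨a, ε, hε, fun u ↦ let ⟨l, n, h⟩ := hfund u; ⟨l, n, l.ne_zero, congrArg Units.val h⟩⟩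
end

section
/- Let K be a finite field of odd characteristic, f ∈ K[X] a nonconstant squarefree polynomial, and a ∈ K[X] a polynomial such that a² − f is a nonzero constant. Define sequences of polynomials a_n, b_n ∈ K[X] by a_0 = 1, b_0 = 0, a_{n+1} = a·a_n + f·b_n, and b_{n+1} = a·b_n + a_n. Then deg f is even, and for every positive integer n the polynomials a_n and b_n are nonzero with deg a_n = n·(deg f)/2 and deg b_n = (n − 1)·(deg f)/2. -/
/-!
Here `(A n, B n)` are the coordinates of `(a + y) ^ n` with respect to `1, y`. Eliminating `A` gives
`A (n + 1) = a * B (n + 1) + (f - a ^ 2) * B n` and the three-term recurrence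
`B (n + 2) = 2 * a * B (n + 1) + (f - a ^ 2) * B n`. Since `f - a ^ 2` has degree less than
`2 * deg a`, the first term dominates in both formulas, so each step multiplies the leading term
of `B` by that of `2 * a`; as `2 ≠ 0`, the degree grows by exactly `deg a`.
-/

section DegreeRecurrence

open Polynomial

variable {R : Type*} [Semiring R] [NoZeroDivisors R] {p q : R[X]} {U : ℕ → R[X]}

theorem degree_two_mul (h2 : (2 : R) ≠ 0) (p : R[X]) : (2 * p).degree = p.degree := by
  rw [← map_ofNat C 2, degree_C_mul h2]

theorem degree_two_mul_pow (h2 : (2 : R) ≠ 0) (p : R[X]) (n : ℕ) :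
    ((2 * p) ^ n).degree = (p ^ n).degree := by
  rw [(Commute.ofNat_left 2 p).mul_pow, ← map_ofNat C 2, ← C_pow, degree_C_mul (pow_ne_zero n h2)]

theorem degree_mul_lt_degree_mul_of_recurrence (hpq : q.degree < (p ^ 2).degree)
    (h0 : (q * U 0).degree < (p * U 1).degree)
    (hU : ∀ n, U (n + 2) = p * U (n + 1) + q * U n) (n : ℕ) :
    (q * U n).degree < (p * U (n + 1)).degree := by
  induction n with
  | zero => exact h0
  | succ n ih =>
    have hne : U (n + 1) ≠ 0 := right_ne_zero_of_mul (ne_zero_of_degree_gt ih)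
    calc (q * U (n + 1)).degree < (p ^ 2 * U (n + 1)).degree := by
          rw [degree_mul, degree_mul]
          exact WithBot.add_lt_add_right (degree_ne_bot.mpr hne) hpq
      _ = (p * U (n + 2)).degree := by
          rw [hU, sq, mul_assoc, degree_mul, degree_mul (p := p) (q := _ + _),
            degree_add_eq_left_of_degree_lt ih]

theorem degree_eq_of_recurrence (hlt : ∀ n, (q * U n).degree < (p * U (n + 1)).degree)
    (hU : ∀ n, U (n + 2) = p * U (n + 1) + q * U n) (n : ℕ) :
    (U (n + 1)).degree = (p ^ n * U 1).degree := by
  induction n with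
  | zero => rw [pow_zero, one_mul]
  | succ n ih =>
    rw [hU, degree_add_eq_left_of_degree_lt (hlt n), degree_mul, ih, ← degree_mul, ← mul_assoc,
      ← pow_succ']

end DegreeRecurrence

section Elimination

variable {S : Type*} [CommRing S] {a f : S} {A B : ℕ → S}

theorem pow_coord_fst_succ (hA : ∀ n, A (n + 1) = a * A n + f * B n)
    (hB : ∀ n, B (n + 1) = a * B n + A n) (n : ℕ) :
    A (n + 1) = a * B (n + 1) + (f - a ^ 2) * B n := by
  rw [hA, hB]
  ring

theorem pow_coord_snd_add_two (hA : ∀ n, A (n + 1) = a * A n + f * B n)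
    (hB : ∀ n, B (n + 1) = a * B n + A n) (n : ℕ) :
    B (n + 2) = 2 * a * B (n + 1) + (f - a ^ 2) * B n := by
  rw [hB (n + 1), pow_coord_fst_succ hA hB]
  ring

end Elimination

section PowCoordDegree

open Polynomial

variable {R : Type*} [CommRing R] [NoZeroDivisors R] {a f : R[X]} {A B : ℕ → R[X]}

theorem degree_sub_sq_mul_pow_coord_snd_lt (h2 : (2 : R) ≠ 0)
    (ha : (f - a ^ 2).degree < (a ^ 2).degree)
    (hA0 : A 0 = 1) (hB0 : B 0 = 0) (hA : ∀ n, A (n + 1) = a * A n + f * B n)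
    (hB : ∀ n, B (n + 1) = a * B n + A n) (n : ℕ) :
    ((f - a ^ 2) * B n).degree < (2 * a * B (n + 1)).degree := by
  have hane : a ≠ 0 := ne_zero_pow two_ne_zero (ne_zero_of_degree_gt ha)
  have hpq : (f - a ^ 2).degree < ((2 * a) ^ 2).degree := by rwa [degree_two_mul_pow h2]
  have h0 : ((f - a ^ 2) * B 0).degree < (2 * a * B 1).degree := by
    rw [hB, hA0, hB0, mul_zero, mul_zero, zero_add, mul_one, degree_zero, degree_two_mul h2]
    exact bot_lt_iff_ne_bot.mpr (degree_ne_bot.mpr hane)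
  exact degree_mul_lt_degree_mul_of_recurrence hpq h0 (pow_coord_snd_add_two hA hB) n

theorem degree_pow_coord_snd_succ (h2 : (2 : R) ≠ 0) (ha : (f - a ^ 2).degree < (a ^ 2).degree)
    (hA0 : A 0 = 1) (hB0 : B 0 = 0) (hA : ∀ n, A (n + 1) = a * A n + f * B n)
    (hB : ∀ n, B (n + 1) = a * B n + A n) (n : ℕ) :
    (B (n + 1)).degree = (a ^ n).degree := by
  have hB1 : B 1 = 1 := by rw [hB, hA0, hB0, mul_zero, zero_add]
  rw [degree_eq_of_recurrence (degree_sub_sq_mul_pow_coord_snd_lt h2 ha hA0 hB0 hA hB)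
    (pow_coord_snd_add_two hA hB), hB1, mul_one, degree_two_mul_pow h2]

theorem degree_pow_coord_fst_succ (h2 : (2 : R) ≠ 0) (ha : (f - a ^ 2).degree < (a ^ 2).degree)
    (hA0 : A 0 = 1) (hB0 : B 0 = 0) (hA : ∀ n, A (n + 1) = a * A n + f * B n)
    (hB : ∀ n, B (n + 1) = a * B n + A n) (n : ℕ) :
    (A (n + 1)).degree = (a ^ (n + 1)).degree := by
  have hlt : ((f - a ^ 2) * B n).degree < (a * B (n + 1)).degree := by
    simpa only [mul_assoc, degree_two_mul h2] using
      degree_sub_sq_mul_pow_coord_snd_lt h2 ha hA0 hB0 hA hB n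
  rw [pow_coord_fst_succ hA hB, degree_add_eq_left_of_degree_lt hlt, degree_mul,
    degree_pow_coord_snd_succ h2 ha hA0 hB0 hA hB, ← degree_mul, ← pow_succ']

theorem degrees_of_unit_powers_odd_char_general (h2 : (2 : R) ≠ 0)
    (ha : (f - a ^ 2).degree < f.degree) (hA0 : A 0 = 1) (hB0 : B 0 = 0)
    (hA : ∀ n, A (n + 1) = a * A n + f * B n) (hB : ∀ n, B (n + 1) = a * B n + A n) :
    Even f.natDegree ∧
      ∀ n : ℕ, 0 < n → A n ≠ 0 ∧ B n ≠ 0 ∧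
        2 * (A n).natDegree = n * f.natDegree ∧
        2 * (B n).natDegree = (n - 1) * f.natDegree := by
  have hsq : (a ^ 2).degree = f.degree := by
    rw [← sub_sub_cancel f (a ^ 2), degree_sub_eq_left_of_degree_lt ha]
  have hane : a ≠ 0 := by
    rintro rfl
    simp at ha
  have hdeg : f.natDegree = 2 * a.natDegree := by
    rw [← natDegree_eq_of_degree_eq hsq, natDegree_pow]
  have hpow_ne (n : ℕ) : (a ^ n).degree ≠ ⊥ := degree_ne_bot.mpr (pow_ne_zero n hane)
  refine ⟨hdeg ▸ even_two_mul _, fun n hn ↦ ?_⟩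
  obtain ⟨n, rfl⟩ := Nat.exists_eq_add_one.mpr hn
  have hAdeg := degree_pow_coord_fst_succ h2 (ha.trans_eq hsq.symm) hA0 hB0 hA hB n
  have hBdeg := degree_pow_coord_snd_succ h2 (ha.trans_eq hsq.symm) hA0 hB0 hA hB n
  refine ⟨degree_ne_bot.mp (hAdeg ▸ hpow_ne _), degree_ne_bot.mp (hBdeg ▸ hpow_ne _), ?_, ?_⟩
  · rw [natDegree_eq_of_degree_eq hAdeg, natDegree_pow, hdeg, mul_left_comm]
  · rw [natDegree_eq_of_degree_eq hBdeg, natDegree_pow, hdeg, mul_left_comm, Nat.add_sub_cancel]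

end PowCoordDegree

/-- Degrees of the coordinate polynomials of powers of a unit `a(x) + y` in
`K[X,Y]/(Y² - f(X))`: `deg f` is even, `deg a_n = n·(deg f)/2` and
`deg b_n = (n-1)·(deg f)/2`. -/
theorem degrees_of_unit_powers_odd_char
    (K : Type*) [Field K] [Finite K] (hodd : Odd (ringChar K))
    (f : Polynomial K) (hf : 0 < f.natDegree) (hsf : Squarefree f)
    (a : Polynomial K) (ha : ∃ μ : K, μ ≠ 0 ∧ a ^ 2 - f = Polynomial.C μ)
    (A B : ℕ → Polynomial K) (hA0 : A 0 = 1) (hB0 : B 0 = 0)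
    (hA : ∀ n, A (n + 1) = a * A n + f * B n)
    (hB : ∀ n, B (n + 1) = a * B n + A n) :
    Even f.natDegree ∧
      ∀ n : ℕ, 0 < n → A n ≠ 0 ∧ B n ≠ 0 ∧
        2 * (A n).natDegree = n * f.natDegree ∧
        2 * (B n).natDegree = (n - 1) * f.natDegree := by
  obtain ⟨μ, -, hμ⟩ := ha
  have h2 : (2 : K) ≠ 0 := Ring.two_ne_zero fun h ↦ Nat.not_odd_iff_even.mpr even_two (h ▸ hodd)
  have hlt : (f - a ^ 2).degree < f.degree := by
    rw [← neg_sub, hμ, Polynomial.degree_neg]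
    exact Polynomial.degree_C_le.trans_lt (Polynomial.natDegree_pos_iff_degree_pos.mp hf)
  exact degrees_of_unit_powers_odd_char_general h2 hlt hA0 hB0 hA hB
end

section
/- Let K be a finite field of characteristic 2, and let B, C ∈ K[X] be nonzero polynomials with B monic, deg B ≥ 2, and deg C < 2·deg B. Let a ∈ K[X] be a polynomial such that a² + a·B + C is a nonzero constant. Define sequences of polynomials a_n, b_n ∈ K[X] by a_0 = 1, b_0 = 0, a_{n+1} = a·a_n + C·b_n, and b_{n+1} = a·b_n + a_n + b_n·B. Then for every positive integer n, deg a_n ≤ n·deg B, and b_n is nonzero with deg b_n = (n − 1)·deg B. -/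
/-!
Since `y² = B y + C`, the element `a + y` satisfies its quadratic equation with trace `T = 2a + B`
and norm `N = a² + aB - C`, so the `y`-coordinates `bₙ` of its powers satisfy
`bₙ₊₂ = T bₙ₊₁ - N bₙ`, with `b₀ = 0` and `b₁ = 1`. When `T` is monic and `deg N < 2 deg T`, the
term `T bₙ₊₁` dominates and `bₙ₊₁` has the degree of `Tⁿ`. The other coordinate is recovered as
`aₙ = bₙ₊₁ - (T - a) bₙ`, and `deg a ≤ deg T` because `a (T - a) = N + C`.
In characteristic `2` one has `T = B` and `N = a² + aB + C`.
-/

open Polynomial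

section Recurrence

variable {R : Type*} [CommRing R] {a B C T N : R} {A b : ℕ → R}

theorem coord_add_two_eq_trace_mul_sub_norm_mul (hT : 2 * a + B = T) (hN : a ^ 2 + a * B - C = N)
    (hA : ∀ n, A (n + 1) = a * A n + C * b n) (hb : ∀ n, b (n + 1) = a * b n + A n + b n * B)
    (n : ℕ) : b (n + 2) = T * b (n + 1) - N * b n := by
  rw [← hT, ← hN]
  linear_combination hb (n + 1) + hA n - a * hb n

theorem coord_eq_sub_trace_sub_mul (hT : 2 * a + B = T)
    (hb : ∀ n, b (n + 1) = a * b n + A n + b n * B) (n : ℕ) :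
    A n = b (n + 1) - (T - a) * b n := by
  rw [← hT]
  linear_combination -hb n

end Recurrence

theorem monic_and_natDegree_eq_of_linear_recurrence {R : Type*} [Ring R] {T N : R[X]} {b : ℕ → R[X]}
    (hTmonic : T.Monic) (hNdeg : N.natDegree < 2 * T.natDegree) (hb0 : b 0 = 0) (hb1 : b 1 = 1)
    (hb : ∀ n, b (n + 2) = T * b (n + 1) - N * b n) (n : ℕ) :
    (b (n + 1)).Monic ∧ (b (n + 1)).natDegree = n * T.natDegree := by
  induction n using Nat.twoStepInduction with
  | zero => simp [hb1]
  | one => simp [hb, hb0, hb1, hTmonic]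
  | more n ih ih' =>
    obtain ⟨-, hdeg⟩ := ih
    obtain ⟨hmonic', hdeg'⟩ := ih'
    have hlead : (T * b (n + 2)).natDegree = (n + 2) * T.natDegree := by
      rw [hTmonic.natDegree_mul hmonic', hdeg']
      ring
    have hlt : (N * b (n + 1)).natDegree < (T * b (n + 2)).natDegree := calc
      (N * b (n + 1)).natDegree ≤ N.natDegree + n * T.natDegree := hdeg ▸ natDegree_mul_le
      _ < 2 * T.natDegree + n * T.natDegree := by gcongr
      _ = (T * b (n + 2)).natDegree := by rw [hlead]; ring
    rw [hb (n + 1)]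
    exact ⟨(hTmonic.mul hmonic').sub_of_left (degree_lt_degree hlt),
      (natDegree_sub_eq_left_of_natDegree_lt hlt).trans hlead⟩

theorem natDegree_le_of_natDegree_mul_sub_le {R : Type*} [Ring R] [IsReduced R] {p q : R[X]}
    (h : (p * (q - p)).natDegree ≤ 2 * q.natDegree) : p.natDegree ≤ q.natDegree := by
  by_contra! hlt
  have hdeg : (q - p).natDegree = p.natDegree := natDegree_sub_eq_right_of_natDegree_lt hlt
  have hlead : (q - p).leadingCoeff = -p.leadingCoeff :=
    leadingCoeff_sub_of_degree_lt' (degree_lt_degree hlt)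
  have hp : p.leadingCoeff ≠ 0 := leadingCoeff_ne_zero.mpr (ne_zero_of_natDegree_gt hlt)
  have hmul : p.leadingCoeff * (q - p).leadingCoeff ≠ 0 := by
    rw [hlead, mul_neg, neg_ne_zero, ← sq]
    exact pow_ne_zero 2 hp
  rw [natDegree_mul' hmul, hdeg] at h
  omega

theorem degrees_of_unit_powers_char_two_general {R : Type*} [CommRing R] [IsReduced R]
    {a B C T N : R[X]} (hT : 2 * a + B = T) (hN : a ^ 2 + a * B - C = N)
    (hTmonic : T.Monic) (hNdeg : N.natDegree < 2 * T.natDegree)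
    (hCdeg : C.natDegree ≤ 2 * T.natDegree) {A b : ℕ → R[X]} (hA0 : A 0 = 1) (hb0 : b 0 = 0)
    (hA : ∀ n, A (n + 1) = a * A n + C * b n) (hb : ∀ n, b (n + 1) = a * b n + A n + b n * B)
    (n : ℕ) (hn : 0 < n) :
    (A n).natDegree ≤ n * T.natDegree ∧
      (b n).Monic ∧ (b n).natDegree = (n - 1) * T.natDegree := by
  have hb1 : b 1 = 1 := by simp [hb, hA0, hb0]
  have hbdeg := monic_and_natDegree_eq_of_linear_recurrence hTmonic hNdeg hb0 hb1
    (coord_add_two_eq_trace_mul_sub_norm_mul hT hN hA hb)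
  have hadeg : a.natDegree ≤ T.natDegree := by
    apply natDegree_le_of_natDegree_mul_sub_le
    have hmul : a * (T - a) = N + C := by rw [← hT, ← hN]; ring
    exact hmul ▸ natDegree_add_le_of_degree_le hNdeg.le hCdeg
  have hconjdeg : (T - a).natDegree ≤ T.natDegree :=
    (natDegree_sub_le T a).trans (max_le le_rfl hadeg)
  obtain ⟨m, rfl⟩ := Nat.exists_eq_add_one.mpr hn
  refine ⟨?_, hbdeg m⟩
  rw [coord_eq_sub_trace_sub_mul hT hb]
  refine (natDegree_sub_le _ _).trans (max_le (hbdeg (m + 1)).2.le ?_)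
  calc ((T - a) * b (m + 1)).natDegree
      ≤ T.natDegree + m * T.natDegree := natDegree_mul_le_of_le hconjdeg (hbdeg m).2.le
    _ = (m + 1) * T.natDegree := by ring

/-- Degrees of the coordinate polynomials of powers of a unit `a(x) + y` in
`K[X,Y]/(Y² + B(X)Y + C(X))` in characteristic `2`: `deg a_n ≤ n·deg B` and
`deg b_n = (n-1)·deg B`. -/
theorem degrees_of_unit_powers_char_two
    (K : Type*) [Field K] [Finite K] (hchar : ringChar K = 2)
    (B C : Polynomial K) (hB0 : B ≠ 0) (hC0 : C ≠ 0)
    (hBmonic : B.Monic) (hBdeg : 2 ≤ B.natDegree)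
    (hCdeg : C.natDegree < 2 * B.natDegree)
    (a : Polynomial K) (ha : ∃ μ : K, μ ≠ 0 ∧ a ^ 2 + a * B + C = Polynomial.C μ)
    (A b : ℕ → Polynomial K) (hA0 : A 0 = 1) (hb0 : b 0 = 0)
    (hA : ∀ n, A (n + 1) = a * A n + C * b n)
    (hb : ∀ n, b (n + 1) = a * b n + A n + b n * B) :
    ∀ n : ℕ, 0 < n →
      (A n).natDegree ≤ n * B.natDegree ∧
      b n ≠ 0 ∧ (b n).natDegree = (n - 1) * B.natDegree := by
  obtain ⟨μ, -, hμ⟩ := ha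
  have : CharP K 2 := ringChar.of_eq hchar
  exact fun n hn ↦ (degrees_of_unit_powers_char_two_general (by simp [CharTwo.two_eq_zero])
    ((CharTwo.sub_eq_add _ _).trans hμ) hBmonic (by rw [natDegree_C]; omega) hCdeg.le
    hA0 hb0 hA hb n hn).imp_right (And.imp_left Monic.ne_zero)
end

section
/- Let K be a finite field of characteristic 2, let B_1, …, B_r ∈ K[X] (r ≥ 1) be pairwise distinct monic irreducible polynomials, let n_1, …, n_r be positive integers, and let D ∈ K[X] be a nonzero polynomial not divisible by any B_i. Put B := B_1^{n_1} ⋯ B_r^{n_r} and C := D·B_1 ⋯ B_r. Then the ring R := K[X,Y]/(Y² + B(X)·Y + C(X)) is an integral domain which is integrally closed in its fraction field; equivalently, R equals the integral closure of K[x] in the quadratic function field F = K(x)(y) defined by y² + B(x)y + C(x) = 0. -/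
/-!
Let `f` be the quadratic polynomial, `y` a root of it, and `A = K[X]`. In characteristic two
`f' = B`, so duality for the trace form gives `B z ∈ A[y]` for every `z` integral over `A`. The
primes dividing `B` are the `B_i`, and `f` is Eisenstein at each of them because `B_i` divides `C`
exactly once. If `f` is Eisenstein at `p`, then `p w ∈ A[y]` implies `w ∈ A[y]` for integral `w`, so
the prime factors of `B` can be cancelled one at a time, and `z ∈ A[y]`.
-/

open Polynomial Algebra

section IntegralClosure

variable {A K L : Type*} [CommRing A] [IsDomain A] [Field K] [Field L] [Algebra A K] [Algebra K L]
  [Algebra A L] [IsScalarTower A K L] [IsFractionRing A K]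

theorem aeval_derivative_minpoly_mul_mem_adjoin [IsIntegrallyClosed A] [FiniteDimensional K L]
    [Algebra.IsSeparable K L] {x z : L} (hx : adjoin K {x} = ⊤) (hAx : IsIntegral A x)
    (hz : IsIntegral A z) :
    aeval x (derivative (minpoly A x)) * z ∈ adjoin A {x} := by
  have hz_dual : z ∈ (traceForm K L).dualSubmodule (Subalgebra.toSubmodule (adjoin A {x})) := by
    intro w hw
    have hw_int : IsIntegral A w := adjoin_le_integralClosure hAx hw
    exact Submodule.mem_one.2 <| IsIntegrallyClosed.isIntegral_iff.1 <|
      isIntegral_trace (hz.mul hw_int)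
  have h_deriv : aeval x (derivative (minpoly K x)) ≠ 0 :=
    (Algebra.IsSeparable.isSeparable K x).aeval_derivative_ne_zero (minpoly.aeval K x)
  have h_map : aeval x (derivative (minpoly K x)) = aeval x (derivative (minpoly A x)) := by
    rw [minpoly.isIntegrallyClosed_eq_field_fractions' K hAx, derivative_map,
      aeval_map_algebraMap]
  rw [traceForm_dualSubmodule_adjoin A K hx hAx] at hz_dual
  obtain ⟨w, hw, rfl⟩ := hz_dual
  rw [← h_map]
  simpa [h_deriv] using hw

theorem smul_mem_adjoin_of_C_mem_span_derivative [IsIntegrallyClosed A] [FiniteDimensional K L]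
    [Algebra.IsSeparable K L] {x z : L} (hx : adjoin K {x} = ⊤) (hAx : IsIntegral A x) {d : A}
    (hd : C d ∈ Ideal.span {minpoly A x, derivative (minpoly A x)}) (hz : IsIntegral A z) :
    d • z ∈ adjoin A {x} := by
  obtain ⟨u, v, huv⟩ := Ideal.mem_span_pair.1 hd
  have h_eval : aeval x v * aeval x (derivative (minpoly A x)) = algebraMap A L d := by
    simpa using congrArg (aeval x) huv
  rw [Algebra.smul_def, ← h_eval, mul_assoc]
  exact mul_mem (aeval_mem_adjoin_singleton A x)
    (aeval_derivative_minpoly_mul_mem_adjoin hx hAx hz)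

theorem mem_adjoin_of_smul_mem_adjoin_of_isEisensteinAt [UniqueFactorizationMonoid A]
    {pb : PowerBasis K L} (hpb : IsIntegral A pb.gen) {d : A} (hd : d ≠ 0)
    (hd_eis : ∀ p, Prime p → p ∣ d → (minpoly A pb.gen).IsEisensteinAt (Ideal.span {p}))
    {z : L} (hz : IsIntegral A z) (hdz : d • z ∈ adjoin A {pb.gen}) :
    z ∈ adjoin A {pb.gen} := by
  induction d using UniqueFactorizationMonoid.induction_on_prime with
  | h₁ => exact absurd rfl hd
  | h₂ u hu =>
    obtain ⟨v, hvu⟩ := hu.exists_left_inv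
    simpa [smul_smul, hvu] using (adjoin A {pb.gen}).smul_mem hdz v
  | h₃ a p ha hp ih =>
    refine ih ha (fun q hq hqa => hd_eis q hq (hqa.mul_left p)) ?_
    rw [mul_smul] at hdz
    exact mem_adjoin_of_smul_prime_smul_of_minpoly_isEisensteinAt hp hpb (hz.smul a) hdz
      (hd_eis p hp (dvd_mul_right p a))

theorem integralClosure_eq_adjoin_of_isEisensteinAt [UniqueFactorizationMonoid A]
    [Algebra.IsSeparable K L] {pb : PowerBasis K L} (hpb : IsIntegral A pb.gen) {d : A} (hd : d ≠ 0)
    (hd_mem : C d ∈ Ideal.span {minpoly A pb.gen, derivative (minpoly A pb.gen)})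
    (hd_eis : ∀ p, Prime p → p ∣ d → (minpoly A pb.gen).IsEisensteinAt (Ideal.span {p})) :
    integralClosure A L = adjoin A {pb.gen} := by
  have := pb.finite
  refine le_antisymm (fun z hz => ?_) (adjoin_le_integralClosure hpb)
  exact mem_adjoin_of_smul_mem_adjoin_of_isEisensteinAt hpb hd hd_eis hz
    (smul_mem_adjoin_of_C_mem_span_derivative pb.adjoin_gen_eq_top hpb hd_mem hz)

end IntegralClosure

section AdjoinRoot

theorem separable_map_of_C_mem_span_derivative {A K : Type*} [CommRing A] [Field K] {φ : A →+* K}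
    (hφ : Function.Injective φ) {f : A[X]} {d : A} (hd : d ≠ 0)
    (hd_mem : C d ∈ Ideal.span {f, derivative f}) : (f.map φ).Separable := by
  obtain ⟨u, v, huv⟩ := Ideal.mem_span_pair.1 hd_mem
  have hφd : φ d ≠ 0 := (map_ne_zero_iff φ hφ).2 hd
  have h_map : u.map φ * f.map φ + v.map φ * derivative (f.map φ) = C (φ d) := by
    simpa using congrArg (map φ) huv
  refine ⟨C (φ d)⁻¹ * u.map φ, C (φ d)⁻¹ * v.map φ, ?_⟩
  rw [mul_assoc, mul_assoc, ← mul_add, h_map, ← C_mul, inv_mul_cancel₀ hφd, C_1]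

theorem isSeparable_adjoinRoot_of_separable {K : Type*} [Field K] {f : K[X]} [Fact (Irreducible f)]
    (hf : f.Separable) : Algebra.IsSeparable K (AdjoinRoot f) := by
  have h_root : IsSeparable K (AdjoinRoot.root f) :=
    hf.of_dvd (minpoly.dvd K _ (by simp [AdjoinRoot.aeval_eq]))
  rw [← IntermediateField.isSeparable_adjoin_simple_iff_isSeparable,
    IntermediateField.adjoin_root_eq_top] at h_root
  exact AlgEquiv.Algebra.isSeparable IntermediateField.topEquiv

theorem minpoly_eq_of_monic_of_irreducible {A L : Type*} [CommRing A] [IsDomain A]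
    [IsIntegrallyClosed A] [CommRing L] [IsDomain L] [Algebra A L] [Module.IsTorsionFree A L]
    {f : A[X]} (hf : f.Monic) (hirr : Irreducible f) {x : L} (hx : aeval x f = 0) :
    minpoly A x = f := by
  have hx_int : IsIntegral A x := ⟨f, hf, hx⟩
  refine eq_of_monic_of_associated (minpoly.monic hx_int) hf ?_
  exact (minpoly.irreducible hx_int).associated_of_dvd hirr
    (minpoly.isIntegrallyClosed_dvd hx_int hx)

theorem isIntegrallyClosed_adjoinRoot_of_isEisensteinAt {A : Type*} [CommRing A] [IsDomain A]
    [UniqueFactorizationMonoid A] {f : A[X]} (hf : f.Monic) (hirr : Irreducible f) {d : A}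
    (hd : d ≠ 0) (hd_mem : C d ∈ Ideal.span {f, derivative f})
    (hd_eis : ∀ p, Prime p → p ∣ d → f.IsEisensteinAt (Ideal.span {p})) :
    IsIntegrallyClosed (AdjoinRoot f) := by
  let K := FractionRing A
  let g : K[X] := f.map (algebraMap A K)
  have hg : Fact (Irreducible g) := ⟨hf.irreducible_iff_irreducible_map_fraction_map.1 hirr⟩
  have h_sep : Algebra.IsSeparable K (AdjoinRoot g) := isSeparable_adjoinRoot_of_separable <|
    separable_map_of_C_mem_span_derivative (IsFractionRing.injective A K) hd hd_mem
  let pb : PowerBasis K (AdjoinRoot g) := AdjoinRoot.powerBasis hg.out.ne_zero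
  have h_root : aeval pb.gen f = 0 := by
    rw [← aeval_map_algebraMap K]
    exact (AdjoinRoot.aeval_eq g).trans AdjoinRoot.mk_self
  have h_tf : Module.IsTorsionFree A (AdjoinRoot g) := .trans_faithfulSMul A K _
  have h_int : IsIntegral A pb.gen := ⟨f, hf, h_root⟩
  have h_minpoly : minpoly A pb.gen = f := minpoly_eq_of_monic_of_irreducible hf hirr h_root
  have h_closure : integralClosure A (AdjoinRoot g) = adjoin A {pb.gen} :=
    integralClosure_eq_adjoin_of_isEisensteinAt h_int hd (h_minpoly ▸ hd_mem) (h_minpoly ▸ hd_eis)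
  have := pb.finite
  have h_closed := integralClosure.isIntegrallyClosedOfFiniteExtension (R := A) K
    (L := AdjoinRoot g)
  rw [h_closure] at h_closed
  rw [← h_minpoly]
  exact .of_equiv (minpoly.equivAdjoin h_int).symm.toRingEquiv

end AdjoinRoot

section Quadratic

variable {A : Type*} [CommRing A] {b c p : A}

theorem isEisensteinAt_quadratic (hp : ¬IsUnit p) (hb : p ∣ b) (hc : p ∣ c) (hc_sq : ¬p ^ 2 ∣ c) :
    (X ^ 2 + C b * X + C c).IsEisensteinAt (Ideal.span {p}) := by
  have : Nontrivial A := ⟨p, 1, fun h => hp (h ▸ isUnit_one)⟩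
  have h_monic : (X ^ 2 + C b * X + C c).Monic := by monicity!
  have h_deg : (X ^ 2 + C b * X + C c).natDegree = 2 := by compute_degree!
  refine ⟨?_, fun {k} hk => ?_, ?_⟩
  · rwa [h_monic.leadingCoeff, Ideal.mem_span_singleton, ← isUnit_iff_dvd_one]
  · rw [h_deg] at hk
    rw [Ideal.mem_span_singleton]
    interval_cases k
    · simpa using hc
    · simpa [coeff_X, coeff_C] using hb
  · simpa [Ideal.span_singleton_pow, Ideal.mem_span_singleton] using hc_sq

theorem irreducible_quadratic_of_prime [IsDomain A] (hp : Prime p) (hb : p ∣ b) (hc : p ∣ c)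
    (hc_sq : ¬p ^ 2 ∣ c) : Irreducible (X ^ 2 + C b * X + C c) := by
  have h_monic : (X ^ 2 + C b * X + C c).Monic := by monicity!
  have h_deg : (X ^ 2 + C b * X + C c).natDegree = 2 := by compute_degree!
  exact (isEisensteinAt_quadratic hp.not_isUnit hb hc hc_sq).irreducible
    ((Ideal.span_singleton_prime hp.ne_zero).2 hp) h_monic.isPrimitive (by simp [h_deg])

theorem isIntegrallyClosed_adjoinRoot_quadratic_of_charTwo [IsDomain A]
    [UniqueFactorizationMonoid A] [CharP A 2] (hirr : Irreducible (X ^ 2 + C b * X + C c))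
    (hb : b ≠ 0) (hc : ∀ p, Prime p → p ∣ b → p ∣ c ∧ ¬p ^ 2 ∣ c) :
    IsIntegrallyClosed (AdjoinRoot (X ^ 2 + C b * X + C c)) := by
  have h_deriv : derivative (X ^ 2 + C b * X + C c) = C b := by
    simp [CharTwo.add_self_eq_zero]
  refine isIntegrallyClosed_adjoinRoot_of_isEisensteinAt (by monicity!) hirr hb ?_ ?_
  · exact Ideal.subset_span (by simp [h_deriv])
  · intro p hp hpb
    exact isEisensteinAt_quadratic hp.not_isUnit hpb (hc p hp hpb).1 (hc p hp hpb).2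

end Quadratic

section PrimeFamily

variable {A ι : Type*} [CommRing A] [IsDomain A] [Fintype ι] {p : ι → A}

theorem associated_of_prime_dvd_prod_pow {q : A} (hp : ∀ i, Prime (p i)) {n : ι → ℕ} (hq : Prime q)
    (hqp : q ∣ ∏ i, p i ^ n i) : ∃ i, Associated q (p i) := by
  obtain ⟨i, -, hi⟩ := hq.exists_mem_finset_dvd hqp
  exact ⟨i, hq.associated_of_dvd (hp i) (hq.dvd_of_dvd_pow hi)⟩

theorem not_sq_dvd_mul_prod_of_pairwise_not_associated (hp : ∀ i, Prime (p i))
    (hp_assoc : Pairwise fun i j => ¬Associated (p i) (p j)) {D : A} {i : ι} (hD : ¬p i ∣ D) :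
    ¬p i ^ 2 ∣ D * ∏ j, p j := by
  classical
  rw [← Finset.mul_prod_erase _ p (Finset.mem_univ i), mul_left_comm, sq,
    mul_dvd_mul_iff_left (hp i).ne_zero, (hp i).dvd_mul, (hp i).dvd_finsetProd_iff]
  rintro (h | ⟨j, hj, hij⟩)
  · exact hD h
  · exact hp_assoc (Finset.ne_of_mem_erase hj).symm ((hp i).associated_of_dvd (hp j) hij)

theorem hasse_ring_integrally_closed_general [UniqueFactorizationMonoid A] [CharP A 2] [Nonempty ι]
    (hp : ∀ i, Prime (p i)) (hp_assoc : Pairwise fun i j => ¬Associated (p i) (p j)) {n : ι → ℕ}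
    (hn : ∀ i, 0 < n i) {D : A} (hD : ∀ i, ¬p i ∣ D) :
    IsDomain (AdjoinRoot (X ^ 2 + C (∏ i, p i ^ n i) * X + C (D * ∏ i, p i))) ∧
      IsIntegrallyClosed (AdjoinRoot (X ^ 2 + C (∏ i, p i ^ n i) * X + C (D * ∏ i, p i))) := by
  have h_dvd_B (i : ι) : p i ∣ ∏ j, p j ^ n j :=
    (dvd_pow_self _ (hn i).ne').trans (Finset.dvd_prod_of_mem _ (Finset.mem_univ i))
  have h_dvd_C (i : ι) : p i ∣ D * ∏ j, p j :=
    (Finset.dvd_prod_of_mem p (Finset.mem_univ i)).mul_left D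
  have h_sq (i : ι) : ¬p i ^ 2 ∣ D * ∏ j, p j :=
    not_sq_dvd_mul_prod_of_pairwise_not_associated hp hp_assoc (hD i)
  obtain ⟨i₀⟩ := ‹Nonempty ι›
  have h_irr := irreducible_quadratic_of_prime (hp i₀) (h_dvd_B i₀) (h_dvd_C i₀) (h_sq i₀)
  refine ⟨AdjoinRoot.isDomain_of_prime h_irr.prime,
    isIntegrallyClosed_adjoinRoot_quadratic_of_charTwo h_irr ?_ fun q hq hqB => ?_⟩
  · exact Finset.prod_ne_zero_iff.2 fun i _ => pow_ne_zero _ (hp i).ne_zero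
  · obtain ⟨i, hi⟩ := associated_of_prime_dvd_prod_pow hp hq hqB
    rw [hi.dvd_iff_dvd_left, hi.pow_pow.dvd_iff_dvd_left]
    exact ⟨h_dvd_C i, h_sq i⟩

end PrimeFamily

/-- For a finite field `K` of characteristic `2` and `B, C` as in the (modified) Hasse
normal form, the ring `R = K[X,Y]/(Y² + B(X)Y + C(X))` is an integrally closed domain,
i.e. it is the integral closure of `K[x]` in the quadratic function field `K(x)(y)`. -/
theorem hasse_ring_integrally_closed
    (K : Type*) [Field K] [Finite K] (hchar : ringChar K = 2)
    (r : ℕ) (hr : 1 ≤ r) (Bi : Fin r → Polynomial K)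
    (hmonic : ∀ i, (Bi i).Monic) (hirr : ∀ i, Irreducible (Bi i))
    (hdist : Function.Injective Bi)
    (n : Fin r → ℕ) (hn : ∀ i, 0 < n i)
    (D : Polynomial K) (hD : D ≠ 0) (hDnd : ∀ i, ¬ Bi i ∣ D)
    (B C : Polynomial K)
    (hB : B = ∏ i, Bi i ^ n i) (hC : C = D * ∏ i, Bi i) :
    IsDomain (AdjoinRoot ((Polynomial.X : Polynomial (Polynomial K)) ^ 2 +
        Polynomial.C B * Polynomial.X + Polynomial.C C)) ∧
      IsIntegrallyClosed (AdjoinRoot ((Polynomial.X : Polynomial (Polynomial K)) ^ 2 +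
        Polynomial.C B * Polynomial.X + Polynomial.C C)) := by
  have := ringChar.of_eq hchar
  have := Fin.pos_iff_nonempty.1 hr
  subst hB hC
  exact hasse_ring_integrally_closed_general (fun i => (hirr i).prime)
    (fun i j hij h => hij (hdist (eq_of_monic_of_associated (hmonic i) (hmonic j) h))) hn hDnd
end
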